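/- arXiv:2211.00965 — 12 statements merged into one kernel-verified Lean document; each statement's English description precedes it below -/
import Mathlib

section
/- Let X be a complex Hilbert space and let A : X → X be a bounded conjugate-linear map satisfying the symmetry ⟨Af, g⟩ = ⟨Ag, f⟩ for all f, g ∈ X (so that the linear operator A² := A∘A is bounded, self-adjoint and positive semi-definite). Assume v ∈ X is a cyclic vector for A², i.e. the closed linear span of {(A²)ⁿ v : n ≥ 0} is all of X. Then there exist (a) a conjugate-linear isometric involution J on X (J is conjugate-linear, ‖Jx‖ = ‖x‖ for all x, and J∘J = I) satisfying J((A²)ⁿ v) = (A²)ⁿ v for every n ≥ 0, and (b) a unitary operator W on X commuting with A², such that A = √(A²) ∘ W ∘ J, where √(A²) denotes the positive square root of A². (Spectral theorem for symmetric anti-linear operators: in the multiplication-operator model A acts as f(s) ↦ s·ψ(s)·conj(f(s)) for a unimodular function ψ.) -/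
open scoped ComplexConjugate InnerProductSpace

theorem aux_polar {X : Type*} [NormedAddCommGroup X] [InnerProductSpace ℂ X] [CompleteSpace X]
    (T R : X →L[ℂ] X) (hR : ∀ x y : X, ⟪R x, y⟫_ℂ = ⟪x, R y⟫_ℂ)
    (T' : X →L[ℂ] X) (hT' : ∀ x y : X, ⟪T x, y⟫_ℂ = ⟪x, T' y⟫_ℂ)
    (h1 : ∀ f, ‖T f‖ = ‖R f‖) (h2 : ∀ f, ‖T' f‖ = ‖R f‖)
    (hc : ∀ f, R (T f) = T (R f)) :
    ∃ W : X ≃ₗᵢ[ℂ] X, (∀ f, W (R f) = T f) ∧ ∀ f, R (W f) = T f := by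
  let N : Submodule ℂ X := LinearMap.ker (R : X →ₗ[ℂ] X)
  have hN : ∀ k : N, R k = 0 := fun k => k.2
  have hTN : ∀ k : N, T k = 0 := fun k => by
    rw [← norm_eq_zero, h1, hN, norm_zero]
  have hTN' : ∀ k : N, T' k = 0 := fun k => by
    rw [← norm_eq_zero, h2, hN, norm_zero]
  let D : (X × N) →ₗ[ℂ] X := LinearMap.coprod (R : X →ₗ[ℂ] X) N.subtype
  let E : (X × N) →ₗ[ℂ] X := LinearMap.coprod (T : X →ₗ[ℂ] X) N.subtype
  have hDa : ∀ f k, D (f, k) = R f + k := fun f k => by simp [D]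
  have hEa : ∀ f k, E (f, k) = T f + k := fun f k => by simp [E]
  have dense_of : ∀ F : (X × N) →ₗ[ℂ] X,
      (∀ x, (∀ p, ⟪F p, x⟫_ℂ = 0) → x = 0) → DenseRange F := by
    intro F hF
    have : (LinearMap.range F).topologicalClosure = ⊤ := by
      rw [Submodule.topologicalClosure_eq_top_iff, Submodule.eq_bot_iff]
      intro x hx
      exact hF x fun p => (Submodule.mem_orthogonal _ _).1 hx _ ⟨p, rfl⟩
    have h := (Submodule.dense_iff_topologicalClosure_eq_top).2 this
    exact h
  have hD : DenseRange D := by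
    refine dense_of D fun x hx => ?_
    have hx0 : R x = 0 := by
      have := hx (R x, 0)
      rw [hDa] at this
      simpa [hR] using this
    have := hx (0, ⟨x, hx0⟩)
    rw [hDa] at this
    simpa using this
  have hE : DenseRange E := by
    refine dense_of E fun x hx => ?_
    have hx0 : T' x = 0 := by
      have := hx (T' x, 0)
      rw [hEa] at this
      simpa [hT'] using this
    have hx0 : R x = 0 := by rw [← norm_eq_zero, ← h2, hx0, norm_zero]
    have := hx (0, ⟨x, hx0⟩)
    rw [hEa] at this
    simpa using this
  have hn : ∀ p, ‖E (LinearEquiv.refl ℂ (X × N) p)‖ = ‖D p‖ := by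
    rintro ⟨f, k⟩
    rw [LinearEquiv.refl_apply, hDa, hEa, ← sq_eq_sq₀ (norm_nonneg _) (norm_nonneg _),
      sq, sq, norm_add_sq_eq_norm_sq_add_norm_sq_of_inner_eq_zero (𝕜 := ℂ),
      norm_add_sq_eq_norm_sq_add_norm_sq_of_inner_eq_zero (𝕜 := ℂ), h1]
    · rw [hR, hN, inner_zero_right]
    · rw [hT', hTN', inner_zero_right]
  let W : X ≃ₗᵢ[ℂ] X := (LinearEquiv.refl ℂ (X × N)).extendOfIsometry D E hD hE hn
  have hW : ∀ p, W (D p) = E p := fun p => LinearEquiv.extendOfIsometry_eq _ _ _ hD hE hn p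
  refine ⟨W, fun f => ?_, fun f => ?_⟩
  · have := hW (f, 0)
    simpa [hDa, hEa] using this
  · refine hD.induction (P := fun f => R (W f) = T f) ?_
      (isClosed_eq (by fun_prop) (by fun_prop)) f
    rintro _ ⟨⟨f, k⟩, rfl⟩
    rw [hW, hDa, hEa, map_add, map_add, hN, hTN, hc]

noncomputable def aux_conj : Polynomial ℂ ≃ₛₗ[starRingEnd ℂ] Polynomial ℂ where
  toFun p := p.map (starRingEnd ℂ)
  invFun p := p.map (starRingEnd ℂ)
  map_add' p q := by simp
  map_smul' c p := by simp
  left_inv p := by simp [Polynomial.map_map]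
  right_inv p := by simp [Polynomial.map_map]

theorem aux_star {X : Type*} [NormedAddCommGroup X] [InnerProductSpace ℂ X] [CompleteSpace X]
    (B : X →L[ℂ] X) (hB : star B = B) (p : Polynomial ℂ) :
    star (Polynomial.aeval B p) = Polynomial.aeval B (p.map (starRingEnd ℂ)) := by
  induction p using Polynomial.induction_on' with
  | add p q hp hq => simp [hp, hq]
  | monomial n a => 
    simp [Polynomial.aeval_monomial, hB, Algebra.algebraMap_eq_smul_one]

theorem aux_J {X : Type*} [NormedAddCommGroup X] [InnerProductSpace ℂ X] [CompleteSpace X]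
    (B : X →L[ℂ] X) (hB : star B = B) (v : X)
    (hd : Dense ((Submodule.span ℂ (Set.range fun n : ℕ => (B ^ n) v) : Submodule ℂ X) : Set X)) :
    ∃ J : X ≃ₛₗᵢ[starRingEnd ℂ] X, (∀ f, J (J f) = f) ∧ (∀ n : ℕ, J ((B ^ n) v) = (B ^ n) v) ∧
      ∀ f, J (B f) = B (J f) := by
  let e : Polynomial ℂ →ₗ[ℂ] X :=
    { toFun := fun p => Polynomial.aeval B p v
      map_add' := fun p q => by simp
      map_smul' := fun c p => by simp }
  have hea : ∀ p, e p = Polynomial.aeval B p v := fun p => rfl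
  have he : DenseRange e := by
    have : Submodule.span ℂ (Set.range fun n : ℕ => (B ^ n) v) ≤ LinearMap.range e := by
      rw [Submodule.span_le]
      rintro _ ⟨n, rfl⟩
      exact ⟨Polynomial.X ^ n, by simp [hea]⟩
    exact hd.mono this
  have hn : ∀ p, ‖e (aux_conj p)‖ = ‖e p‖ := by
    intro p
    have hs := aux_star B hB p
    have hnorm : IsStarNormal (Polynomial.aeval B p) := ⟨by
      rw [hs, commute_iff_eq, ← map_mul, ← map_mul, mul_comm]⟩
    have := ContinuousLinearMap.isStarNormal_iff_norm_eq_adjoint.1 hnorm v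
    rw [← ContinuousLinearMap.star_eq_adjoint, hs] at this
    exact this.symm
  let J : X ≃ₛₗᵢ[starRingEnd ℂ] X := aux_conj.extendOfIsometry e e he he hn
  have hJ : ∀ p, J (e p) = e (p.map (starRingEnd ℂ)) :=
    fun p => LinearEquiv.extendOfIsometry_eq _ _ _ he he hn p
  refine ⟨J, fun f => ?_, fun n => ?_, fun f => ?_⟩
  · refine he.induction (P := fun f => J (J f) = f) ?_
      (isClosed_eq (by fun_prop) (by fun_prop)) f
    rintro _ ⟨p, rfl⟩
    simp [hJ, Polynomial.map_map]
  · have := hJ (Polynomial.X ^ n)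
    simpa [hea] using this
  · refine he.induction (P := fun f => J (B f) = B (J f)) ?_
      (isClosed_eq (by fun_prop) (by fun_prop)) f
    rintro _ ⟨p, rfl⟩
    have h : ∀ q, B (e q) = e (Polynomial.X * q) := fun q => by simp [hea]
    rw [h, hJ, hJ, h]
    simp

theorem aux_inner {X : Type*} [NormedAddCommGroup X] [InnerProductSpace ℂ X]
    (J : X ≃ₛₗᵢ[starRingEnd ℂ] X) (f g : X) : ⟪J f, J g⟫_ℂ = ⟪g, f⟫_ℂ := by
  have e1 : ∀ a b : X, ‖J a + J b‖ = ‖a + b‖ := fun a b => by rw [← map_add, J.norm_map]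
  have e2 : ∀ a b : X, ‖J a - J b‖ = ‖a - b‖ := fun a b => by rw [← map_sub, J.norm_map]
  have hre : ∀ a b : X, (⟪J a, J b⟫_ℂ).re = (⟪b, a⟫_ℂ).re := by
    intro a b
    have h1 := re_inner_eq_norm_add_mul_self_sub_norm_mul_self_sub_norm_mul_self_div_two
      (𝕜 := ℂ) (J a) (J b)
    have h2 := re_inner_eq_norm_add_mul_self_sub_norm_mul_self_sub_norm_mul_self_div_two
      (𝕜 := ℂ) a b
    rw [e1, J.norm_map, J.norm_map, ← h2] at h1
    simp only [RCLike.re_to_complex] at h1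
    rw [h1, ← inner_conj_symm, Complex.conj_re]
  apply Complex.ext (hre f g)
  have h := hre f (Complex.I • g)
  rw [J.map_smulₛₗ, inner_smul_right, inner_smul_left] at h
  simpa using h

/-- **Spectral theorem for bounded symmetric anti-linear operators.**
If `A` is a bounded conjugate-linear map on a complex Hilbert space `X`, symmetric in the
sense that `⟪A f, g⟫ = ⟪A g, f⟫`, and `v` is a cyclic vector for the bounded positive
self-adjoint operator `A²`, then there are a conjugate-linear isometric involution `J` fixing
every `(A²)ⁿ v`, and a unitary `W` commuting with `A²`, such that `A = √(A²) ∘ W ∘ J`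
(the square root being the unique positive square root of `A²`). -/
theorem spectral_theorem_symmetric_antilinear
    {X : Type*} [NormedAddCommGroup X] [InnerProductSpace ℂ X] [CompleteSpace X]
    (A : X → X)
    (hadd : ∀ f g : X, A (f + g) = A f + A g)
    (hsmul : ∀ (c : ℂ) (f : X), A (c • f) = conj c • A f)
    (hbdd : ∃ Cb : ℝ, ∀ f : X, ‖A f‖ ≤ Cb * ‖f‖)
    (hsym : ∀ f g : X, ⟪A f, g⟫_ℂ = ⟪A g, f⟫_ℂ)
    (v : X)
    (hcyc : closure ((Submodule.span ℂ
        (Set.range fun n : ℕ => (fun x => A (A x))^[n] v) : Submodule ℂ X) : Set X)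
      = Set.univ) :
    ∃ (J : X → X) (W : X ≃ₗᵢ[ℂ] X) (R : X →L[ℂ] X),
      (∀ f g : X, J (f + g) = J f + J g) ∧
      (∀ (c : ℂ) (f : X), J (c • f) = conj c • J f) ∧
      (∀ f : X, ‖J f‖ = ‖f‖) ∧
      (∀ f : X, J (J f) = f) ∧
      (∀ n : ℕ, J ((fun x => A (A x))^[n] v) = (fun x => A (A x))^[n] v) ∧
      (∀ f : X, W (A (A f)) = A (A (W f))) ∧
      R.IsPositive ∧
      (∀ f : X, R (R f) = A (A f)) ∧
      (∀ f : X, A f = R (W (J f))) := by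
  obtain ⟨C, hC⟩ := hbdd
  let L : X →SL[starRingEnd ℂ] X :=
    LinearMap.mkContinuous { toFun := A, map_add' := hadd, map_smul' := hsmul } C hC
  have hL : ∀ f, L f = A f := fun f => rfl
  let B : X →L[ℂ] X := L.comp L
  have hBa : ∀ f, B f = A (A f) := fun f => rfl
  have hBi : ∀ f g, ⟪B f, g⟫_ℂ = ⟪A g, A f⟫_ℂ := fun f g => by rw [hBa, hsym]
  have hBsa : IsSelfAdjoint B := by
    rw [ContinuousLinearMap.isSelfAdjoint_iff_isSymmetric]
    intro f g
    change ⟪B f, g⟫_ℂ = ⟪f, B g⟫_ℂ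
    rw [hBi, ← inner_conj_symm f, hBi, inner_conj_symm]
  have hBpos : 0 ≤ B := by
    rw [ContinuousLinearMap.nonneg_iff_isPositive, ContinuousLinearMap.isPositive_def']
    refine ⟨hBsa, fun f => ?_⟩
    rw [ContinuousLinearMap.reApplyInnerSelf_apply, hBi]
    exact inner_self_nonneg
  have hpow : ∀ n : ℕ, (fun x => A (A x))^[n] v = (B ^ n) v := by
    intro n
    induction n with
    | zero => simp
    | succ n ih =>
      rw [Function.iterate_succ_apply', ih, pow_succ', ContinuousLinearMap.mul_apply, hBa]
  simp only [hpow] at hcyc ⊢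
  obtain ⟨J, hJJ, hJv, hJB⟩ := aux_J B hBsa.star_eq v (dense_iff_closure_eq.2 hcyc)
  have hJi : ∀ f g, ⟪J f, g⟫_ℂ = ⟪J g, f⟫_ℂ := by
    intro f g
    have h := aux_inner J f (J g)
    rwa [hJJ] at h
  let T : X →L[ℂ] X := L.comp (J.toContinuousLinearEquiv : X →SL[starRingEnd ℂ] X)
  let T' : X →L[ℂ] X := (J.toContinuousLinearEquiv : X →SL[starRingEnd ℂ] X).comp L
  have hTa : ∀ f, T f = A (J f) := fun f => rfl
  have hTa' : ∀ f, T' f = J (A f) := fun f => rfl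
  let R : X →L[ℂ] X := CFC.sqrt B
  have hRpos : R.IsPositive := by
    rw [← ContinuousLinearMap.nonneg_iff_isPositive]
    exact CFC.sqrt_nonneg B
  have hRR : ∀ f, R (R f) = B f := by
    intro f
    rw [← ContinuousLinearMap.mul_apply]
    congr 1
    exact CFC.sqrt_mul_sqrt_self B hBpos
  have hRs : ∀ x y : X, ⟪R x, y⟫_ℂ = ⟪x, R y⟫_ℂ := fun x y => hRpos.isSymmetric x y
  have hnA : ∀ f, ‖A f‖ = ‖R f‖ := by
    intro f
    have h : ⟪A f, A f⟫_ℂ = ⟪R f, R f⟫_ℂ := by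
      rw [← hBi, hRs, ← inner_conj_symm, hRR]
      rw [← hRR, ← hRs, hRs, hRR, inner_conj_symm, ← hRR, hRs, hRs, hRR]
    rw [@norm_eq_sqrt_re_inner ℂ, @norm_eq_sqrt_re_inner ℂ, h]
  have hcomm : Commute B T := by
    ext f
    change B (T f) = T (B f)
    rw [hTa, hTa, hJB, hBa, hBa]
  have hcR : Commute R T := hcomm.cfcₙ_nnreal _
  have hc : ∀ f, R (T f) = T (R f) := fun f => DFunLike.congr_fun hcR.eq f
  have hT' : ∀ x y : X, ⟪T x, y⟫_ℂ = ⟪x, T' y⟫_ℂ := by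
    intro x y
    rw [hTa, hTa', hsym, ← inner_conj_symm, hJi, inner_conj_symm]
  have h2 : ∀ f, ‖T' f‖ = ‖R f‖ := fun f => by rw [hTa', J.norm_map, hnA]
  have h1 : ∀ f, ‖T f‖ = ‖R f‖ := by
    intro f
    rw [hTa]
    have h : ⟪A (J f), A (J f)⟫_ℂ = ⟪A f, A f⟫_ℂ := by
      rw [← hBi, ← hJB, hJi, hJJ, ← inner_conj_symm, hBi, inner_conj_symm]
    rw [← hnA, @norm_eq_sqrt_re_inner ℂ, @norm_eq_sqrt_re_inner ℂ, h]
  obtain ⟨W, hW1, hW2⟩ := aux_polar T R hRs T' hT' h1 h2 hc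
  refine ⟨J, W, R, map_add J, fun c f => J.map_smulₛₗ c f, J.norm_map, hJJ, hJv, fun f => ?_,
    hRpos, fun f => by rw [hRR, hBa], fun f => ?_⟩
  · rw [← hBa, ← hBa, ← hRR, ← hRR, hW1, hW2, hc]
  · rw [hW2, hTa, hJJ]
end

section
/- Let Γ be a Hankel operator on ℓ²(ℕ, ℂ), H := Γ∘C the associated anti-linear Hankel operator, H̃ := H∘S, and u := He₀ its symbol. Let R denote the closure of the range of H. Assume that there exist vectors v, w ∈ R such that the closed linear span of {(H²)ⁿ v : n ≥ 0} equals R and the closed linear span of {(H̃²)ⁿ w : n ≥ 0} equals R (i.e. the restrictions of H² and of H̃² to R have simple spectrum). Then u itself is cyclic for both restrictions: the closed linear span of {(H²)ⁿ u : n ≥ 0} equals R, and the closed linear span of {(H̃²)ⁿ u : n ≥ 0} equals R. -/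
open scoped ComplexConjugate InnerProductSpace

set_option linter.unusedSectionVars false

namespace HankelAux

section abstract_part

variable {E : Type*} [NormedAddCommGroup E] [InnerProductSpace ℂ E] [CompleteSpace E]

lemma clm_eq_on_closure (f : ℕ → E) (φ ψ : E →L[ℂ] ℂ) (h : ∀ n, φ (f n) = ψ (f n))
    (x : E) (hx : x ∈ (Submodule.span ℂ (Set.range f)).topologicalClosure) : φ x = ψ x := by
  have h1 : (Submodule.span ℂ (Set.range f)).topologicalClosure ≤ (φ - ψ).ker := by
    apply Submodule.topologicalClosure_minimal
    · rw [Submodule.span_le]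
      rintro _ ⟨n, rfl⟩
      simp [h n]
    · exact (φ - ψ).isClosed_ker
  have := h1 hx
  rw [LinearMap.mem_ker] at this
  simpa [sub_eq_zero] using this

lemma exists_sq (T : E → E) (hT : Continuous T) (sym : ∀ f g, ⟪T f, g⟫_ℂ = ⟪T g, f⟫_ℂ) :
    ∃ A : E →L[ℂ] E, ∀ x, A x = T (T x) := by
  have sq : ∀ x y, ⟪T (T x), y⟫_ℂ = ⟪x, T (T y)⟫_ℂ := fun x y => by
    rw [sym, ← inner_conj_symm, sym, inner_conj_symm]
  refine ⟨⟨⟨⟨fun x => T (T x), ?_⟩, ?_⟩, hT.comp hT⟩, fun x => rfl⟩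
  · intro x y
    refine ext_inner_right ℂ fun z => ?_
    simp only [inner_add_left, sq]
  · intro c x
    refine ext_inner_right ℂ fun z => ?_
    simp only [inner_smul_left, sq, RingHom.id_apply]

lemma inv_orth (T : E → E) (sym : ∀ f g, ⟪T f, g⟫_ℂ = ⟪T g, f⟫_ℂ)
    (A : E →L[ℂ] E) (hA : ∀ x, A x = T (T x)) (v : E) (M : Submodule ℂ E)
    [M.HasOrthogonalProjection] (hM : ∀ x ∈ M, A x ∈ M)
    (hMR : M ≤ (Submodule.span ℂ (Set.range fun n : ℕ => A^[n] v)).topologicalClosure)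
    (x : E) (hxR : x ∈ (Submodule.span ℂ (Set.range fun n : ℕ => A^[n] v)).topologicalClosure)
    (hx : x ∈ Mᗮ) : T x ∈ Mᗮ := by
  have sq : ∀ x y, ⟪A x, y⟫_ℂ = ⟪x, A y⟫_ℂ := fun x y => by
    rw [hA, hA, sym, ← inner_conj_symm, sym, inner_conj_symm]
  have sh : ∀ x y, ⟪T (A x), y⟫_ℂ = ⟪T x, A y⟫_ℂ := fun x y => by
    rw [← sq, hA, hA]
  have sh' : ∀ (n : ℕ) x y, ⟪T (A^[n] x), y⟫_ℂ = ⟪T x, A^[n] y⟫_ℂ := by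
    intro n
    induction n with
    | zero => intro x y; rfl
    | succ n ih =>
      intro x y
      rw [Function.iterate_succ_apply', sh, ih, Function.iterate_succ_apply]
  have hMo : ∀ y ∈ Mᗮ, A y ∈ Mᗮ := by
    intro y hy
    rw [Submodule.mem_orthogonal] at hy ⊢
    intro m hm
    rw [← sq]
    exact hy _ (hM m hm)
  set P := M.starProjection with hP
  have hPA : ∀ y, P (A y) = A (P y) := by
    intro y
    refine Submodule.eq_starProjection_of_mem_orthogonal (hM _ (Submodule.starProjection_apply_mem _ _)) ?_
    rw [← map_sub]
    exact hMo _ (Submodule.sub_starProjection_mem_orthogonal _)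
  have hPA' : ∀ (n : ℕ) y, P (A^[n] y) = A^[n] (P y) := by
    intro n
    induction n with
    | zero => intro y; rfl
    | succ n ih =>
      intro y
      rw [Function.iterate_succ_apply', hPA, ih, Function.iterate_succ_apply']
  have hQA' : ∀ (n : ℕ) y, A^[n] y - P (A^[n] y) = A^[n] (y - P y) := by
    intro n
    induction n with
    | zero => intro y; rfl
    | succ n ih =>
      intro y
      rw [Function.iterate_succ_apply', hPA, ← map_sub, ih, Function.iterate_succ_apply']
  have hPM : ∀ y ∈ M, P y = y := fun y hy => Submodule.starProjection_eq_self_iff.2 hy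
  have hPx : P x = 0 := by
    refine Submodule.eq_starProjection_of_mem_orthogonal (zero_mem _) ?_
    simpa using hx
  have comm : ∀ (k n : ℕ) y, A^[k] (A^[n] y) = A^[n] (A^[k] y) := fun k n y => by
    rw [← Function.iterate_add_apply, add_comm, Function.iterate_add_apply]
  have step1 : ∀ k : ℕ, ⟪T (P v), A^[k] (v - P v)⟫_ℂ = 0 := by
    intro k
    have := clm_eq_on_closure (fun n : ℕ => A^[n] v)
      ((innerSL ℂ (T (A^[k] (v - P v)))).comp P)
      ((innerSL ℂ (T (A^[k] (P v)))).comp (ContinuousLinearMap.id ℂ E - P)) ?_ (P v)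
      (hMR (Submodule.starProjection_apply_mem _ _))
    · simp only [ContinuousLinearMap.comp_apply, innerSL_apply_apply,
        _root_.sub_apply, ContinuousLinearMap.id_apply] at this
      rw [hPM (P v) (Submodule.starProjection_apply_mem _ _), sub_self, inner_zero_right, sym] at this
      exact this
    · intro n
      simp only [ContinuousLinearMap.comp_apply, innerSL_apply_apply,
        _root_.sub_apply, ContinuousLinearMap.id_apply]
      rw [hQA', hPA', sym, sh', sh', comm]
  have step2 : ∀ j : ℕ, ⟪T (A^[j] (P v)), x⟫_ℂ = 0 := by
    intro j
    have := clm_eq_on_closure (fun n : ℕ => A^[n] v)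
      ((innerSL ℂ (T (A^[j] (P v)))).comp (ContinuousLinearMap.id ℂ E - P)) 0 ?_ x hxR
    · simpa [hPx] using this
    · intro n
      simp only [ContinuousLinearMap.comp_apply, innerSL_apply_apply,
        _root_.sub_apply, ContinuousLinearMap.id_apply, _root_.zero_apply]
      rw [hQA', sh', ← Function.iterate_add_apply, step1]
  rw [Submodule.mem_orthogonal']
  intro m hm
  have := clm_eq_on_closure (fun n : ℕ => A^[n] v) ((innerSL ℂ (T x)).comp P) 0 ?_ m (hMR hm)
  · simpa [hPM m hm] using this
  · intro n
    simp only [ContinuousLinearMap.comp_apply, innerSL_apply_apply, _root_.zero_apply]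
    rw [hPA', sym, step2]

lemma span_iter_le (f : E → E) (u : E) (W : Submodule ℂ E) (hu : u ∈ W) (hf : ∀ x ∈ W, f x ∈ W) :
    Submodule.span ℂ (Set.range fun n : ℕ => f^[n] u) ≤ W := by
  rw [Submodule.span_le]
  rintro _ ⟨n, rfl⟩
  show f^[n] u ∈ W
  induction n with
  | zero => exact hu
  | succ n ih => rw [Function.iterate_succ_apply']; exact hf _ ih

lemma span_iter_self (f : E → E) (u : E) :
    u ∈ Submodule.span ℂ (Set.range fun n : ℕ => f^[n] u) :=
  Submodule.subset_span ⟨0, rfl⟩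

lemma span_iter_inv (A : E →L[ℂ] E) (u : E) (x : E)
    (hx : x ∈ Submodule.span ℂ (Set.range fun n : ℕ => A^[n] u)) :
    A x ∈ Submodule.span ℂ (Set.range fun n : ℕ => A^[n] u) := by
  have : Submodule.span ℂ (Set.range fun n : ℕ => A^[n] u) ≤
      (Submodule.span ℂ (Set.range fun n : ℕ => A^[n] u)).comap (A : E →ₗ[ℂ] E) := by
    rw [Submodule.span_le]
    rintro _ ⟨n, rfl⟩
    exact Submodule.subset_span ⟨n + 1, Function.iterate_succ_apply' _ _ _⟩
  exact this hx

lemma closure_inv (A : E →L[ℂ] E) (W : Submodule ℂ E) (h : ∀ x ∈ W, A x ∈ W) (x : E)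
    (hx : x ∈ W.topologicalClosure) : A x ∈ W.topologicalClosure :=
  map_mem_closure A.continuous hx h

theorem core (S Sstar : E →L[ℂ] E) (e0 : E) (H : E → E) (hcont : Continuous H)
    (sym : ∀ f g, ⟪H f, g⟫_ℂ = ⟪H g, f⟫_ℂ)
    (hHS : ∀ x, H (S x) = Sstar (H x))
    (adj : ∀ x y, ⟪Sstar x, y⟫_ℂ = ⟪x, S y⟫_ℂ)
    (hSS : ∀ x, S (Sstar x) = x - ⟪e0, x⟫_ℂ • e0)
    (hz : ∀ x, (∀ n : ℕ, ⟪e0, Sstar^[n] x⟫_ℂ = 0) → x = 0)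
    (v w : E)
    (hv : closure (Submodule.span ℂ (Set.range fun n : ℕ => (fun x => H (H x))^[n] v) : Set E)
      = closure (Set.range H))
    (hw : closure (Submodule.span ℂ
        (Set.range fun n : ℕ => (fun x => H (S (H (S x))))^[n] w) : Set E)
      = closure (Set.range H)) :
    closure (Submodule.span ℂ (Set.range fun n : ℕ => (fun x => H (H x))^[n] (H e0)) : Set E)
      = closure (Set.range H) ∧
    closure (Submodule.span ℂ
        (Set.range fun n : ℕ => (fun x => H (S (H (S x))))^[n] (H e0)) : Set E)
      = closure (Set.range H) := by
  have symt : ∀ f g, ⟪H (S f), g⟫_ℂ = ⟪H (S g), f⟫_ℂ := fun f g => by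
    rw [sym, ← adj, ← hHS]
  obtain ⟨A, hA⟩ := exists_sq H hcont sym
  obtain ⟨B, hB⟩ := exists_sq (fun x => H (S x)) (hcont.comp S.continuous) symt
  have hA' : (fun x => H (H x)) = A := by funext x; exact (hA x).symm
  have hB' : (fun x => H (S (H (S x)))) = B := by funext x; exact (hB x).symm
  rw [hA'] at hv ⊢
  rw [hB'] at hw ⊢
  set u := H e0 with hu
  -- rank one perturbation
  have hAB : ∀ x, B x = A x - ⟪u, x⟫_ℂ • u := by
    intro x
    refine ext_inner_right ℂ fun z => ?_
    rw [hB, hA, sym, hHS x, hSS, inner_sub_right, inner_sub_left, sym (H x) z,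
      inner_smul_right, inner_smul_left, sym z e0, ← inner_conj_symm e0 (H x), sym x e0]
  set WA := Submodule.span ℂ (Set.range fun n : ℕ => A^[n] u) with hWA
  set WB := Submodule.span ℂ (Set.range fun n : ℕ => B^[n] u) with hWB
  have hW : WA = WB := by
    apply le_antisymm
    · refine span_iter_le _ _ _ (span_iter_self _ _) fun x hx => ?_
      have : A x = B x + ⟪u, x⟫_ℂ • u := by rw [hAB]; abel
      rw [this]
      exact add_mem (span_iter_inv B u x hx) (Submodule.smul_mem _ _ (span_iter_self _ _))
    · refine span_iter_le _ _ _ (span_iter_self _ _) fun x hx => ?_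
      rw [hAB]
      exact sub_mem (span_iter_inv A u x hx) (Submodule.smul_mem _ _ (span_iter_self _ _))
  rw [← hW, and_self]
  set M := WA.topologicalClosure with hM
  set R := (Submodule.span ℂ (Set.range fun n : ℕ => A^[n] v)).topologicalClosure with hR
  have hRc : (R : Set E) = closure (Set.range H) := hv
  have hRR : (Submodule.span ℂ (Set.range fun n : ℕ => B^[n] w)).topologicalClosure = R := by
    apply SetLike.coe_injective
    rw [hRc, ← hw]; rfl
  have hHR : ∀ x, H x ∈ R := fun x => by
    rw [← SetLike.mem_coe, hRc]; exact subset_closure ⟨x, rfl⟩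
  have hRcl : IsClosed (R : Set E) := Submodule.isClosed_topologicalClosure _
  have hMcl : IsClosed (M : Set E) := Submodule.isClosed_topologicalClosure _
  have hMR : M ≤ R := by
    refine Submodule.topologicalClosure_minimal _ ?_ hRcl
    refine span_iter_le _ _ _ (hHR _) fun x _ => ?_
    rw [hA]; exact hHR _
  have hAM : ∀ x ∈ M, A x ∈ M := closure_inv A WA fun x hx => span_iter_inv A u x hx
  have hBM : ∀ x ∈ M, B x ∈ M := closure_inv B WA fun x hx => by
    rw [hW] at hx ⊢; exact span_iter_inv B u x hx
  have huM : u ∈ M := subset_closure (span_iter_self _ _)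
  have : CompleteSpace M := hMcl.completeSpace_coe
  set N := R ⊓ Mᗮ with hN
  have hHN : ∀ x ∈ N, H x ∈ N := fun x hx =>
    ⟨hHR x, inv_orth H sym A hA v M hAM hMR x hx.1 hx.2⟩
  have hHtN : ∀ x ∈ N, H (S x) ∈ N := fun x hx =>
    ⟨hHR _, inv_orth (fun x => H (S x)) symt B hB w M hBM (hRR ▸ hMR) x (hRR ▸ hx.1) hx.2⟩
  have hNcl : IsClosed (N : Set E) := hRcl.inter M.isClosed_orthogonal
  -- kernel
  have hker : ∀ x ∈ R, H x = 0 → x = 0 := by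
    intro x hx h0
    have h1 : ∀ y ∈ closure (Set.range H), ⟪y, x⟫_ℂ = 0 := by
      have hcl : IsClosed {y : E | ⟪y, x⟫_ℂ = 0} :=
        isClosed_eq (by fun_prop) continuous_const
      refine fun y hy => closure_minimal ?_ hcl hy
      rintro _ ⟨y, rfl⟩
      show ⟪H y, x⟫_ℂ = 0
      rw [sym, h0, inner_zero_left]
    exact inner_self_eq_zero.1 (h1 x (hRc ▸ hx))
  -- the good part of N
  let N' : Submodule ℂ E := N ⊓ N.comap (Sstar : E →ₗ[ℂ] E) ⊓
    (LinearMap.ker ((innerSL ℂ e0 : E →L[ℂ] ℂ) : E →ₗ[ℂ] ℂ))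
  have hN'cl : IsClosed (N' : Set E) :=
    (hNcl.inter (hNcl.preimage Sstar.continuous)).inter (innerSL ℂ e0 : E →L[ℂ] ℂ).isClosed_ker
  have hHN' : ∀ x ∈ N, H x ∈ N' := by
    intro x hx
    refine ⟨⟨hHN x hx, ?_⟩, ?_⟩
    · show Sstar (H x) ∈ N
      rw [← hHS]; exact hHtN x hx
    · show ⟪e0, H x⟫_ℂ = 0
      rw [← inner_conj_symm, sym, (Submodule.mem_orthogonal _ _).1 hx.2 _ huM, map_zero]
  have : CompleteSpace N' := hN'cl.completeSpace_coe
  have hNN : ∀ x ∈ N, x ∈ N' := by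
    intro x hx
    have h1 : x - N'.starProjection x ∈ N :=
      sub_mem hx (Submodule.starProjection_apply_mem N' x).1.1
    have h2 : x - N'.starProjection x ∈ N'ᗮ := Submodule.sub_starProjection_mem_orthogonal _
    have h3 : H (x - N'.starProjection x) = 0 := by
      refine inner_self_eq_zero (𝕜 := ℂ).1 ?_
      rw [sym]
      exact (Submodule.mem_orthogonal _ _).1 h2 _ (hHN' _ (hHN _ h1))
    have h4 := hker _ h1.1 h3
    rw [sub_eq_zero.1 h4]
    exact Submodule.starProjection_apply_mem N' x
  have hit : ∀ (n : ℕ), ∀ x ∈ N, Sstar^[n] x ∈ N := by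
    intro n
    induction n with
    | zero => exact fun x hx => hx
    | succ n ih =>
      intro x hx
      rw [Function.iterate_succ_apply]
      exact ih _ (hNN x hx).1.2
  have hN0 : ∀ x ∈ N, x = 0 := fun x hx => hz x fun n => (hNN _ (hit n x hx)).2
  have hRM : R ≤ M := by
    intro x hx
    have h1 : x - M.starProjection x ∈ N :=
      ⟨sub_mem hx (hMR (Submodule.starProjection_apply_mem M x)),
        Submodule.sub_starProjection_mem_orthogonal _⟩
    rw [sub_eq_zero.1 (hN0 _ h1)]
    exact Submodule.starProjection_apply_mem M x
  rw [← hRc]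
  show (M : Set E) = R
  rw [le_antisymm hMR hRM]

end abstract_part

end HankelAux

set_option maxHeartbeats 2000000 in
/-- **Cyclicity of the symbol.** For a bounded Hankel operator `Γ` on `ℓ²(ℕ, ℂ)`
(`ΓS = S*Γ`), with associated anti-linear Hankel operator `H = Γ∘C`, truncated operator
`H̃ = H∘S` and symbol `u = H e₀`: if the restrictions of `H²` and `H̃²` to
`R = closure (Ran H)` have simple spectrum (i.e. admit cyclic vectors `v, w ∈ R`), then the
symbol `u` is itself a cyclic vector for both restrictions. -/
theorem symbol_cyclic_of_simple_spectrum
    (S Sstar Γ : lp (fun _ : ℕ => ℂ) 2 →L[ℂ] lp (fun _ : ℕ => ℂ) 2)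
    (hS0 : ∀ x : lp (fun _ : ℕ => ℂ) 2, S x 0 = 0)
    (hSsucc : ∀ (x : lp (fun _ : ℕ => ℂ) 2) (n : ℕ), S x (n + 1) = x n)
    (hSstar : ∀ (x : lp (fun _ : ℕ => ℂ) 2) (n : ℕ), Sstar x n = x (n + 1))
    (hHankel : ∀ x : lp (fun _ : ℕ => ℂ) 2, Γ (S x) = Sstar (Γ x))
    (C : lp (fun _ : ℕ => ℂ) 2 → lp (fun _ : ℕ => ℂ) 2)
    (hC : ∀ (x : lp (fun _ : ℕ => ℂ) 2) (n : ℕ), C x n = conj (x n))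
    (H : lp (fun _ : ℕ => ℂ) 2 → lp (fun _ : ℕ => ℂ) 2)
    (hH : ∀ x, H x = Γ (C x))
    (e0 : lp (fun _ : ℕ => ℂ) 2) (he0 : e0 0 = 1) (he0' : ∀ n : ℕ, n ≠ 0 → e0 n = 0)
    (u : lp (fun _ : ℕ => ℂ) 2) (hu : u = H e0)
    (R : Set (lp (fun _ : ℕ => ℂ) 2)) (hR : R = closure (Set.range H))
    (v w : lp (fun _ : ℕ => ℂ) 2) (hv : v ∈ R) (hw : w ∈ R)
    (hvcyc : closure ((Submodule.span ℂ
        (Set.range fun n : ℕ => (fun x => H (H x))^[n] v) :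
          Submodule ℂ (lp (fun _ : ℕ => ℂ) 2)) : Set (lp (fun _ : ℕ => ℂ) 2)) = R)
    (hwcyc : closure ((Submodule.span ℂ
        (Set.range fun n : ℕ => (fun x => H (S (H (S x))))^[n] w) :
          Submodule ℂ (lp (fun _ : ℕ => ℂ) 2)) : Set (lp (fun _ : ℕ => ℂ) 2)) = R) :
    closure ((Submodule.span ℂ
        (Set.range fun n : ℕ => (fun x => H (H x))^[n] u) :
          Submodule ℂ (lp (fun _ : ℕ => ℂ) 2)) : Set (lp (fun _ : ℕ => ℂ) 2)) = R ∧
    closure ((Submodule.span ℂ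
        (Set.range fun n : ℕ => (fun x => H (S (H (S x))))^[n] u) :
          Submodule ℂ (lp (fun _ : ℕ => ℂ) 2)) : Set (lp (fun _ : ℕ => ℂ) 2)) = R := by
  have hCs : ∀ x, C x = star x := fun x => by
    apply lp.ext; funext n; rw [hC]; rfl
  have hH' : ∀ x, H x = Γ (star x) := fun x => by rw [hH, hCs]
  have hcont : Continuous H := by
    have : H = fun x => Γ (star x) := funext hH'
    rw [this]; exact Γ.continuous.comp continuous_star
  have hstarStar : ∀ (n m : ℕ) (x : lp (fun _ : ℕ => ℂ) 2), Sstar^[n] x m = x (m + n) := by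
    intro n
    induction n with
    | zero => intro m x; rfl
    | succ n ih =>
      intro m x
      rw [Function.iterate_succ_apply', hSstar, ih, show m + 1 + n = m + (n + 1) by omega]
  have hSs : ∀ n : ℕ, S (lp.single 2 n (1 : ℂ)) = lp.single 2 (n + 1) (1 : ℂ) := by
    intro n
    apply lp.ext; funext m
    cases m with
    | zero => rw [hS0, lp.single_apply_ne]; omega
    | succ m =>
      rw [hSsucc]
      by_cases h : m = n
      · subst h; rw [lp.single_apply_self, lp.single_apply_self]
      · rw [lp.single_apply_ne _ _ _ h, lp.single_apply_ne]; omega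
  have hΓs : ∀ n m : ℕ, Γ (lp.single 2 n (1 : ℂ)) m = Γ (lp.single 2 0 (1 : ℂ)) (m + n) := by
    intro n
    induction n with
    | zero => intro m; rfl
    | succ n ih =>
      intro m
      rw [← hSs, hHankel, hSstar, ih, show m + 1 + n = m + (n + 1) by omega]
  have hext : ∀ φ ψ : lp (fun _ : ℕ => ℂ) 2 →L[ℂ] ℂ,
      (∀ n : ℕ, φ (lp.single 2 n (1 : ℂ)) = ψ (lp.single 2 n (1 : ℂ))) → φ = ψ := by
    intro φ ψ h
    refine lp.ext_continuousLinearMap (by norm_num) fun i => ?_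
    ext
    simpa using h i
  have hstars : ∀ n : ℕ, star (lp.single 2 n (1 : ℂ) : lp (fun _ : ℕ => ℂ) 2)
      = lp.single 2 n (1 : ℂ) := by
    intro n
    apply lp.ext; funext m
    rw [lp.star_apply]
    by_cases h : m = n
    · subst h; rw [lp.single_apply_self]; simp
    · rw [lp.single_apply_ne _ _ _ h]; simp
  have hinner1 : ∀ (n : ℕ) (x : lp (fun _ : ℕ => ℂ) 2), ⟪lp.single 2 n (1 : ℂ), x⟫_ℂ = x n := by
    intro n x; rw [lp.inner_single_left]; simp
  have hinner2 : ∀ (n : ℕ) (x : lp (fun _ : ℕ => ℂ) 2), ⟪star x, lp.single 2 n (1 : ℂ)⟫_ℂ = x n := by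
    intro n x; rw [lp.inner_single_right, lp.star_apply]; simp
  have hstarin : ∀ x y : lp (fun _ : ℕ => ℂ) 2, ⟪star x, y⟫_ℂ = ⟪star y, x⟫_ℂ := by
    intro x y
    rw [lp.inner_eq_tsum, lp.inner_eq_tsum]
    refine tsum_congr fun i => ?_
    rw [lp.star_apply, lp.star_apply]
    simp [mul_comm]
  have hB1 : ∀ (m : ℕ) (g : lp (fun _ : ℕ => ℂ) 2),
      ⟪star (Γ (lp.single 2 m (1 : ℂ))), g⟫_ℂ = Γ g m := by
    intro m g
    have := hext (innerSL ℂ (star (Γ (lp.single 2 m (1 : ℂ)))))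
      ((innerSL ℂ (lp.single 2 m (1 : ℂ) : lp (fun _ : ℕ => ℂ) 2)).comp Γ) ?_
    · have := congrArg (fun φ => φ g) this
      simpa only [ContinuousLinearMap.comp_apply, innerSL_apply_apply, hinner1] using this
    · intro n
      simp only [ContinuousLinearMap.comp_apply, innerSL_apply_apply, hinner1, hinner2]
      rw [hΓs, hΓs n, add_comm]
  have hB2 : ∀ f g : lp (fun _ : ℕ => ℂ) 2, ⟪star f, Γ g⟫_ℂ = ⟪star g, Γ f⟫_ℂ := by
    intro f g
    rw [hstarin f]
    have := hext (innerSL ℂ (star (Γ g))) ((innerSL ℂ (star g)).comp Γ) ?_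
    · have := congrArg (fun φ => φ f) this
      simpa only [ContinuousLinearMap.comp_apply, innerSL_apply_apply] using this
    · intro n
      simp only [ContinuousLinearMap.comp_apply, innerSL_apply_apply]
      rw [hinner2, hstarin g, hB1]
  have sym : ∀ f g, ⟪H f, g⟫_ℂ = ⟪H g, f⟫_ℂ := by
    intro f g
    rw [← inner_conj_symm, ← inner_conj_symm (H g), hH', hH']
    have := hB2 (star f) (star g)
    rw [star_star, star_star] at this
    rw [this]
  have he : e0 = lp.single 2 0 (1 : ℂ) := by
    apply lp.ext; funext m
    by_cases h : m = 0
    · subst h; rw [lp.single_apply_self, he0]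
    · rw [lp.single_apply_ne _ _ _ h, he0' m h]
  have hHS : ∀ x, H (S x) = Sstar (H x) := by
    intro x
    rw [hH', hH', ← hHankel]
    congr 1
    apply lp.ext; funext m
    rw [lp.star_apply]
    cases m with
    | zero => rw [hS0, hS0, star_zero]
    | succ m => rw [hSsucc, hSsucc, lp.star_apply]
  have adj : ∀ x y, ⟪Sstar x, y⟫_ℂ = ⟪x, S y⟫_ℂ := by
    intro x y
    have hsum : Summable (fun i : ℕ => ⟪x i, S y i⟫_ℂ) := lp.summable_inner (𝕜 := ℂ) x (S y)
    rw [lp.inner_eq_tsum, lp.inner_eq_tsum, hsum.tsum_eq_zero_add, hS0, inner_zero_right, zero_add]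
    refine tsum_congr fun i => ?_
    rw [hSstar, hSsucc]
  have hSS : ∀ x, S (Sstar x) = x - ⟪e0, x⟫_ℂ • e0 := by
    intro x
    rw [he, hinner1, ← he]
    apply lp.ext; funext m
    rw [lp.coeFn_sub, Pi.sub_apply, lp.coeFn_smul, Pi.smul_apply]
    cases m with
    | zero => rw [hS0, he0]; simp
    | succ m => rw [hSsucc, hSstar, he0' _ (Nat.succ_ne_zero m)]; simp
  have hz : ∀ x, (∀ n : ℕ, ⟪e0, Sstar^[n] x⟫_ℂ = 0) → x = 0 := by
    intro x h
    apply lp.ext; funext m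
    have := h m
    rw [he, hinner1, hstarStar, zero_add] at this
    rw [this]; rfl
  subst hR
  subst hu
  exact HankelAux.core S Sstar e0 H hcont sym hHS adj hSS hz v w hvcyc hwcyc
end

section
/- Let Γ be a Hankel operator on ℓ²(ℕ, ℂ) and let H := Γ∘C be the associated anti-linear Hankel operator. Then the kernel of H is trivial, Ker H = {0}, if and only if the vector e₀ belongs to the closure of the range of H but does not belong to the range of H itself. -/
open scoped ComplexConjugate InnerProductSpace

/-- **Triviality of the kernel of a Hankel operator.** For a bounded Hankel operator `Γ` on
`ℓ²(ℕ, ℂ)` with associated anti-linear Hankel operator `H = Γ∘C`, the kernel of `H` is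
trivial if and only if `e₀` belongs to the closure of the range of `H` but not to the
range of `H` itself. -/
theorem hankel_trivial_kernel_iff
    (S Sstar Γ : lp (fun _ : ℕ => ℂ) 2 →L[ℂ] lp (fun _ : ℕ => ℂ) 2)
    (hS0 : ∀ x : lp (fun _ : ℕ => ℂ) 2, S x 0 = 0)
    (hSsucc : ∀ (x : lp (fun _ : ℕ => ℂ) 2) (n : ℕ), S x (n + 1) = x n)
    (hSstar : ∀ (x : lp (fun _ : ℕ => ℂ) 2) (n : ℕ), Sstar x n = x (n + 1))
    (hHankel : ∀ x : lp (fun _ : ℕ => ℂ) 2, Γ (S x) = Sstar (Γ x))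
    (C : lp (fun _ : ℕ => ℂ) 2 → lp (fun _ : ℕ => ℂ) 2)
    (hC : ∀ (x : lp (fun _ : ℕ => ℂ) 2) (n : ℕ), C x n = conj (x n))
    (H : lp (fun _ : ℕ => ℂ) 2 → lp (fun _ : ℕ => ℂ) 2)
    (hH : ∀ x, H x = Γ (C x))
    (e0 : lp (fun _ : ℕ => ℂ) 2) (he0 : e0 0 = 1) (he0' : ∀ n : ℕ, n ≠ 0 → e0 n = 0) :
    (∀ x : lp (fun _ : ℕ => ℂ) 2, H x = 0 → x = 0) ↔
      (e0 ∈ closure (Set.range H) ∧ e0 ∉ Set.range H) := by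
  have hnp : (2 : ENNReal) ≠ ⊤ := by norm_num
  let e : ℕ → lp (fun _ : ℕ => ℂ) 2 := fun k => lp.single 2 k (1 : ℂ)
  have he : ∀ k n, e k n = if n = k then 1 else 0 := by
    intro k n
    simp only [e, lp.single_apply, Pi.single_apply]
  have hSe : ∀ k, S (e k) = e (k + 1) := by
    intro k
    ext n
    cases n with
    | zero => rw [hS0, he]; simp
    | succ n => rw [hSsucc, he, he]; simp
  have hent : ∀ k j, Γ (e k) j = Γ (e 0) (j + k) := by
    intro k
    induction k with
    | zero => intro j; rfl
    | succ k ih =>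
      intro j
      rw [← hSe, hHankel, hSstar, ih]
      rw [show j + 1 + k = j + (k + 1) by omega]
  have hsymm : ∀ k j, Γ (e k) j = Γ (e j) k := by
    intro k j
    rw [hent, hent j k, add_comm]
  have hexp : ∀ v : lp (fun _ : ℕ => ℂ) 2, HasSum (fun k => v k • e k) v := by
    intro v
    have h := lp.hasSum_single hnp v
    convert h using 2 with k
    ext n
    simp [e, lp.single_apply, Pi.single_apply]
  have hCC : ∀ x, C (C x) = x := by
    intro x
    ext n
    simp [hC]
  have key : ∀ (x : lp (fun _ : ℕ => ℂ) 2) (j : ℕ), ⟪x, Γ (e j)⟫_ℂ = H x j := by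
    intro x j
    have h1 := lp.hasSum_inner (𝕜 := ℂ) x (Γ (e j))
    have h2 := (hexp (C x)).mapL ((innerSL ℂ (e j)).comp Γ)
    have h3 : ∀ y : lp (fun _ : ℕ => ℂ) 2, ⟪e j, y⟫_ℂ = y j := by
      intro y
      simp [e, lp.inner_single_left]
    simp only [ContinuousLinearMap.comp_apply, map_smul, innerSL_apply_apply, h3, smul_eq_mul] at h2
    rw [hH]
    refine h1.unique ?_
    convert h2 using 2 with k
    rw [hC, hsymm k j]
    simp [mul_comm]
  have hrange : Set.range H = (LinearMap.range Γ.toLinearMap : Set (lp (fun _ : ℕ => ℂ) 2)) := by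
    ext z
    constructor
    · rintro ⟨x, rfl⟩
      exact ⟨C x, (hH x).symm⟩
    · rintro ⟨x, rfl⟩
      exact ⟨C x, by rw [hH, hCC]; rfl⟩
  have hHS : ∀ x, H (S x) = Sstar (H x) := by
    intro x
    have : C (S x) = S (C x) := by
      ext n
      cases n with
      | zero => simp [hC, hS0]
      | succ n => simp [hC, hSsucc]
    rw [hH, hH, this, hHankel]
  have hSse : Sstar e0 = 0 := by
    ext n
    rw [hSstar, he0' _ (Nat.succ_ne_zero n)]
    rfl
  constructor
  · intro hker
    constructor
    · rw [hrange, ← Submodule.topologicalClosure_coe]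
      have : (LinearMap.range Γ.toLinearMap).topologicalClosure = ⊤ := by
        rw [Submodule.topologicalClosure_eq_top_iff, Submodule.eq_bot_iff]
        intro x hx
        apply hker
        ext j
        exact (key x j).symm.trans ((Submodule.mem_orthogonal' _ _).1 hx _ ⟨e j, rfl⟩)
      rw [this]
      trivial
    · rintro ⟨x, hx⟩
      have h1 : S x = 0 := hker _ (by rw [hHS, hx, hSse])
      have h2 : x = 0 := by
        ext n
        rw [← hSsucc, h1]
        rfl
      have h3 : C x = 0 := by
        ext n
        rw [hC, h2]
        simp
      rw [hH, h3, map_zero] at hx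
      rw [← hx] at he0
      simp at he0
  · rintro ⟨hcl, hnr⟩ x hx
    have hperp : ∀ x, H x = 0 → x 0 = 0 := by
      intro x hx
      have h1 : ∀ v, ⟪x, Γ v⟫_ℂ = 0 := by
        intro v
        have h2 := (hexp v).mapL ((innerSL ℂ x).comp Γ)
        simp only [ContinuousLinearMap.comp_apply, map_smul, innerSL_apply_apply, key, hx,
          smul_eq_mul] at h2
        refine h2.unique ?_
        simpa using (hasSum_zero : HasSum (fun _ : ℕ => (0 : ℂ)) 0)
      have h4 : closure (Set.range H) ⊆ {z | ⟪x, z⟫_ℂ = 0} := by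
        apply closure_minimal
        · rintro _ ⟨w, rfl⟩
          simp only [Set.mem_setOf_eq, hH, h1]
        · exact isClosed_eq (by fun_prop) continuous_const
      have h5 : ⟪x, e0⟫_ℂ = 0 := h4 hcl
      have h6 : e0 = e 0 := by
        ext n
        rw [he]
        split_ifs with h
        · rw [h, he0]
        · exact he0' n h
      rw [h6] at h5
      simpa [e, lp.inner_single_right] using h5
    have hstep : ∀ x, H x = 0 → H (Sstar x) = 0 := by
      intro x hx
      have h1 : S (Sstar x) = x := by
        ext n
        cases n with
        | zero => rw [hS0, hperp x hx]
        | succ n => rw [hSsucc, hSstar]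
      have h2 : Sstar (H (Sstar x)) = 0 := by rw [← hHS, h1, hx]
      set y := H (Sstar x) with hy
      have h3 : y = y 0 • e0 := by
        ext n
        cases n with
        | zero => simp [he0]
        | succ n =>
          rw [← hSstar, h2]
          simp [he0']
      by_contra hne
      have hc : y 0 ≠ 0 := by
        intro h
        rw [h, zero_smul] at h3
        exact hne h3
      apply hnr
      rw [hrange]
      refine ⟨(y 0)⁻¹ • C (Sstar x), ?_⟩
      change Γ _ = _
      rw [map_smul, ← hH, ← hy, h3]
      rw [smul_smul]
      simp [he0, hc]
    have hall : ∀ n, ∀ x, H x = 0 → x n = 0 := by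
      intro n
      induction n with
      | zero => exact hperp
      | succ n ih =>
        intro x hx
        rw [← hSstar]
        exact ih _ (hstep x hx)
    ext n
    rw [hall n x hx]
    rfl
end

section
/- Let Γ be a Hankel operator on ℓ²(ℕ, ℂ) and let H := Γ∘C be the associated anti-linear Hankel operator. Then the kernel of H is either the zero subspace or an infinite-dimensional subspace: if Ker H ≠ {0}, then Ker H is infinite-dimensional. -/
open scoped ComplexConjugate InnerProductSpace

/-- **Dichotomy for the kernel of a Hankel operator.** For a bounded Hankel operator `Γ` on
`ℓ²(ℕ, ℂ)` with associated anti-linear Hankel operator `H = Γ∘C`, if the kernel of `H` is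
nontrivial then it is infinite-dimensional: it contains an infinite linearly independent
family. -/
theorem hankel_kernel_trivial_or_infiniteDimensional
    (S Sstar Γ : lp (fun _ : ℕ => ℂ) 2 →L[ℂ] lp (fun _ : ℕ => ℂ) 2)
    (hS0 : ∀ x : lp (fun _ : ℕ => ℂ) 2, S x 0 = 0)
    (hSsucc : ∀ (x : lp (fun _ : ℕ => ℂ) 2) (n : ℕ), S x (n + 1) = x n)
    (hSstar : ∀ (x : lp (fun _ : ℕ => ℂ) 2) (n : ℕ), Sstar x n = x (n + 1))
    (hHankel : ∀ x : lp (fun _ : ℕ => ℂ) 2, Γ (S x) = Sstar (Γ x))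
    (C : lp (fun _ : ℕ => ℂ) 2 → lp (fun _ : ℕ => ℂ) 2)
    (hC : ∀ (x : lp (fun _ : ℕ => ℂ) 2) (n : ℕ), C x n = conj (x n))
    (H : lp (fun _ : ℕ => ℂ) 2 → lp (fun _ : ℕ => ℂ) 2)
    (hH : ∀ x, H x = Γ (C x))
    (hker : ∃ x : lp (fun _ : ℕ => ℂ) 2, x ≠ 0 ∧ H x = 0) :
    ∃ f : ℕ → lp (fun _ : ℕ => ℂ) 2,
      LinearIndependent ℂ f ∧ ∀ n : ℕ, H (f n) = 0 := by
  obtain ⟨x, hx, hHx⟩ := hker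
  have hex : ∃ k, x k ≠ 0 := by
    by_contra hcon
    push Not at hcon
    apply hx
    ext n
    simpa using hcon n
  classical
  let k := Nat.find hex
  have hk : x k ≠ 0 := Nat.find_spec hex
  have hlt : ∀ m, m < k → x m = 0 := fun m hm => not_not.mp (Nat.find_min hex hm)
  let f : ℕ → lp (fun _ : ℕ => ℂ) 2 := fun n => (fun y => S y)^[n] x
  have hfs : ∀ n, f (n + 1) = S (f n) := fun n => Function.iterate_succ_apply' _ n x
  have hdiag : ∀ n, f n (k + n) = x k := by
    intro n
    induction n with
    | zero => rfl
    | succ n ih => rw [hfs, ← add_assoc, hSsucc, ih]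
  have hlow : ∀ n m, m < k + n → f n m = 0 := by
    intro n
    induction n with
    | zero => exact fun m hm => hlt m hm
    | succ n ih =>
      intro m hm
      rw [hfs]
      cases m with
      | zero => exact hS0 _
      | succ m => rw [hSsucc]; exact ih m (by omega)
  refine ⟨f, ?_, ?_⟩
  · rw [linearIndependent_iff']
    intro s g hg i
    induction i using Nat.strong_induction_on with
    | _ i ih =>
      intro hi
      have h1 : (∑ j ∈ s, g j • f j : lp (fun _ : ℕ => ℂ) 2) (k + i) = 0 := by
        rw [hg]; rfl
      rw [lp.coeFn_sum, Finset.sum_apply, Finset.sum_eq_single i] at h1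
      · have h2 : g i * f i (k + i) = 0 := h1
        rw [hdiag] at h2
        exact (mul_eq_zero.mp h2).resolve_right hk
      · intro j hj hne
        change g j * f j (k + i) = 0
        rcases lt_or_gt_of_ne hne with h | h
        · rw [ih j h hj, zero_mul]
        · rw [hlow j (k + i) (by omega), mul_zero]
      · exact fun h => absurd hi h
  · intro n
    induction n with
    | zero => exact hHx
    | succ n ih =>
      have hc : C (S (f n)) = S (C (f n)) := by
        ext m
        cases m with
        | zero => rw [hC, hS0, hS0, map_zero]
        | succ m => rw [hC, hSsucc, hSsucc, hC]
      rw [hfs, hH, hc, hHankel, ← hH, ih, map_zero]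
end

section
/- Let R be a bounded self-adjoint operator on a complex Hilbert space X, let p ∈ X, let α ∈ ℝ, and set R_α := R + α⟨·, p⟩p (a rank-one self-adjoint perturbation of R). For a vector v, write ⟨v⟩_A for the closed linear span of {Aⁿ v : n ≥ 0}. Then: (1) ⟨p⟩_R = ⟨p⟩_{R_α}; and (2) if both R and R_α have simple spectrum (i.e. each possesses a cyclic vector, a vector whose cyclic subspace is all of X), then there exists a vector v₂ in the orthogonal complement of ⟨p⟩_R such that v := p + v₂ is simultaneously a cyclic vector for R and for R_α. -/
open scoped InnerProductSpace

section aux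
variable {X : Type*} [NormedAddCommGroup X] [InnerProductSpace ℂ X]

def cyc (A : X →L[ℂ] X) (v : X) : Submodule ℂ X :=
  (Submodule.span ℂ (Set.range fun n : ℕ => (A ^ n) v)).topologicalClosure

lemma cyc_isClosed (A : X →L[ℂ] X) (v : X) : IsClosed (cyc A v : Set X) :=
  Submodule.isClosed_topologicalClosure _

lemma cyc_self (A : X →L[ℂ] X) (v : X) : v ∈ cyc A v :=
  Submodule.le_topologicalClosure _ (Submodule.subset_span ⟨0, by simp⟩)

lemma cyc_min (A : X →L[ℂ] X) (v : X) (N : Submodule ℂ X) (hN : IsClosed (N : Set X))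
    (hv : v ∈ N) (hA : ∀ x ∈ N, A x ∈ N) : cyc A v ≤ N := by
  refine Submodule.topologicalClosure_minimal _ ?_ hN
  rw [Submodule.span_le]
  rintro _ ⟨n, rfl⟩
  induction n with
  | zero => simpa using hv
  | succ k ih =>
    simp only [pow_succ', ContinuousLinearMap.mul_apply]
    exact hA _ ih

lemma cyc_inv (A : X →L[ℂ] X) (v : X) : ∀ x ∈ cyc A v, A x ∈ cyc A v := by
  have h : cyc A v ≤ (cyc A v).comap (A : X →ₗ[ℂ] X) := by
    refine Submodule.topologicalClosure_minimal _ ?_ ((cyc_isClosed A v).preimage A.continuous)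
    rw [Submodule.span_le]
    rintro _ ⟨n, rfl⟩
    refine Submodule.le_topologicalClosure _ (Submodule.subset_span ⟨n + 1, ?_⟩)
    simp [pow_succ']
  exact fun x hx => h hx

variable [CompleteSpace X]

lemma orth_inv {A : X →L[ℂ] X} (hA : IsSelfAdjoint A) (K : Submodule ℂ X)
    (hK : ∀ x ∈ K, A x ∈ K) : ∀ x ∈ Kᗮ, A x ∈ Kᗮ := by
  intro x hx
  rw [Submodule.mem_orthogonal] at hx ⊢
  intro u hu
  have := hx _ (hK u hu)
  rwa [← ContinuousLinearMap.adjoint_inner_right, ← ContinuousLinearMap.star_eq_adjoint,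
    hA.star_eq] at this

lemma proj_comm {A : X →L[ℂ] X} (hA : IsSelfAdjoint A) (K : Submodule ℂ X)
    [K.HasOrthogonalProjection]
    (hK : ∀ x ∈ K, A x ∈ K) : Commute K.starProjection A := by
  ext x
  simp only [ContinuousLinearMap.mul_apply]
  refine (Submodule.eq_starProjection_of_mem_orthogonal (hK _ (K.starProjection_apply_mem x)) ?_)
  rw [← map_sub]
  exact orth_inv hA K hK _ (K.sub_starProjection_mem_orthogonal x)

/-- Every self-adjoint operator in the commutant is approximated on `w`. -/
lemma approx {A : X →L[ℂ] X} (hA : IsSelfAdjoint A) (w : X) (hw : cyc A w = ⊤) (y : X)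
    {ε : ℝ} (hε : 0 < ε) :
    ∃ B : X →L[ℂ] X, (∀ T, Commute T A → Commute T B ∧ Commute T (star B)) ∧
      ‖B w - y‖ < ε := by
  have hy : y ∈ cyc A w := hw ▸ Submodule.mem_top
  obtain ⟨z, hz, hd⟩ := Metric.mem_closure_iff.1 (show y ∈ closure _ from hy) ε hε
  rw [dist_comm, dist_eq_norm] at hd
  suffices ∃ B : X →L[ℂ] X, (∀ T, Commute T A → Commute T B ∧ Commute T (star B)) ∧ B w = z by
    obtain ⟨B, h1, h2⟩ := this
    exact ⟨B, h1, by rwa [h2]⟩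
  clear hd
  induction hz using Submodule.span_induction with
  | mem x hx =>
    obtain ⟨n, rfl⟩ := hx
    exact ⟨A ^ n, fun T hT => ⟨hT.pow_right n, by
      rw [star_pow, hA.star_eq]; exact hT.pow_right n⟩, rfl⟩
  | zero => exact ⟨0, fun T _ => by simp, by simp⟩
  | add x y _ _ hx hy =>
    obtain ⟨B, h1, rfl⟩ := hx
    obtain ⟨C, h2, rfl⟩ := hy
    exact ⟨B + C, fun T hT => ⟨(h1 T hT).1.add_right (h2 T hT).1, by
      rw [star_add]; exact (h1 T hT).2.add_right (h2 T hT).2⟩, by simp⟩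
  | smul a x _ hx =>
    obtain ⟨B, h1, rfl⟩ := hx
    exact ⟨a • B, fun T hT => ⟨(h1 T hT).1.smul_right a, by
      rw [star_smul]; exact (h1 T hT).2.smul_right _⟩, by simp⟩

lemma normal_norm (N : X →L[ℂ] X) (h : Commute (star N) N) (w : X) : ‖star N w‖ = ‖N w‖ := by
  have h1 : ⟪star N w, star N w⟫_ℂ = ⟪N w, N w⟫_ℂ := by
    have e := DFunLike.congr_fun h.eq w
    simp only [ContinuousLinearMap.mul_apply] at e
    rw [ContinuousLinearMap.star_eq_adjoint] at e ⊢
    rw [ContinuousLinearMap.adjoint_inner_right, ← e, ContinuousLinearMap.adjoint_inner_left]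
  rw [@norm_eq_sqrt_re_inner ℂ, @norm_eq_sqrt_re_inner ℂ, h1]

lemma comm_inner {A : X →L[ℂ] X} (hA : IsSelfAdjoint A) (w : X) (hw : cyc A w = ⊤)
    (P Q : X →L[ℂ] X) (hQ : IsSelfAdjoint Q) (hPA : Commute P A)
    (hQA : Commute Q A) (C : X →L[ℂ] X) (hC : ∀ T, Commute T A → Commute T C) :
    ⟪C w, P (Q w)⟫_ℂ = ⟪C w, Q (P w)⟫_ℂ := by
  rw [← sub_eq_zero, ← norm_eq_zero]
  by_contra hne
  have hpos := lt_of_le_of_ne (norm_nonneg _) (Ne.symm hne)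
  set d := ‖⟪C w, P (Q w)⟫_ℂ - ⟪C w, Q (P w)⟫_ℂ‖ with hd
  set M := ‖C w‖ * ‖P‖ + ‖C‖ * ‖P w‖ + 1 with hM
  have hM0 : 0 < M := by positivity
  obtain ⟨B, hB, hBy⟩ := approx hA w hw (Q w) (div_pos hpos hM0)
  have hBA : Commute B A := (hB A (Commute.refl _)).1.symm
  have hsBA : Commute (star B) A := (hB A (Commute.refl _)).2.symm
  have hBB : Commute (star B) B := (hB _ hsBA).1
  have hQB := hB Q hQA
  have hnorm : ‖(star B) w - Q w‖ = ‖B w - Q w‖ := by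
    have := normal_norm (B - Q) (by
      rw [star_sub, hQ.star_eq]
      exact (hBB.sub_left hQB.1).sub_right (hQB.2.symm.sub_left (Commute.refl _))) w
    simpa [star_sub, hQ.star_eq] using this
  have e1 : P (B w) = B (P w) := DFunLike.congr_fun (hB P hPA).1.eq w
  have e2 : ⟪C w, B (P w)⟫_ℂ = ⟪C (star B w), P w⟫_ℂ := by
    have : star B (C w) = C (star B w) := DFunLike.congr_fun (hC _ hsBA).eq w
    rw [← this, ContinuousLinearMap.star_eq_adjoint, ContinuousLinearMap.adjoint_inner_left]
  have e3 : ⟪C w, Q (P w)⟫_ℂ = ⟪C (Q w), P w⟫_ℂ := by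
    have : Q (C w) = C (Q w) := DFunLike.congr_fun (hC _ hQA).eq w
    rw [← this]
    nth_rw 2 [← hQ.star_eq]
    rw [ContinuousLinearMap.star_eq_adjoint, ContinuousLinearMap.adjoint_inner_left]
  have key : ⟪C w, P (Q w)⟫_ℂ - ⟪C w, Q (P w)⟫_ℂ
      = -⟪C w, P (B w - Q w)⟫_ℂ + ⟪C (star B w - Q w), P w⟫_ℂ := by
    rw [map_sub, map_sub, inner_sub_right, inner_sub_left, e1, e2, e3]; ring
  have b1 : ‖⟪C w, P (B w - Q w)⟫_ℂ‖ ≤ ‖C w‖ * (‖P‖ * ‖B w - Q w‖) :=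
    (norm_inner_le_norm _ _).trans (by gcongr; exact P.le_opNorm _)
  have b2 : ‖⟪C (star B w - Q w), P w⟫_ℂ‖ ≤ (‖C‖ * ‖B w - Q w‖) * ‖P w‖ :=
    (norm_inner_le_norm _ _).trans (by gcongr; rw [← hnorm]; exact C.le_opNorm _)
  have b3 : d ≤ ‖C w‖ * (‖P‖ * ‖B w - Q w‖) + (‖C‖ * ‖B w - Q w‖) * ‖P w‖ := by
    rw [hd, key]
    refine (norm_add_le _ _).trans ?_
    rw [norm_neg]; exact add_le_add b1 b2
  rw [lt_div_iff₀ hM0] at hBy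
  have := norm_nonneg (B w - Q w)
  nlinarith

lemma comm_of_cyclic {A : X →L[ℂ] X} (hA : IsSelfAdjoint A) (w : X) (hw : cyc A w = ⊤)
    (P Q : X →L[ℂ] X) (hQ : IsSelfAdjoint Q) (hPA : Commute P A)
    (hQA : Commute Q A) (x : X) : P (Q x) = Q (P x) := by
  have h0 : P (Q w) = Q (P w) := by
    rw [← sub_eq_zero]
    by_contra hne
    set y := P (Q w) - Q (P w) with hy
    obtain ⟨B, hB, hBy⟩ := approx hA w hw y (norm_pos_iff.2 hne)
    have h1 : ⟪B w, y⟫_ℂ = 0 := by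
      rw [hy, inner_sub_right, comm_inner hA w hw P Q hQ hPA hQA B (fun T hT => (hB T hT).1),
        sub_self]
    have h2 : ‖⟪B w - y, y⟫_ℂ‖ = ‖y‖ * ‖y‖ := by
      rw [inner_sub_left, h1, zero_sub, norm_neg, inner_self_eq_norm_sq_to_K]
      simp [sq]
    have h3 := norm_inner_le_norm (𝕜 := ℂ) (B w - y) y
    have := norm_pos_iff.2 hne
    nlinarith
  have hcl : cyc A w ≤ LinearMap.ker ((P * Q - Q * P : X →L[ℂ] X) : X →ₗ[ℂ] X) := by
    have hc : Commute (P * Q - Q * P) A := (hPA.mul_left hQA).sub_left (hQA.mul_left hPA)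
    refine cyc_min A w _ (ContinuousLinearMap.isClosed_ker _) ?_ ?_
    · simp [h0]
    · intro x hx
      have hx' : (P * Q - Q * P) x = 0 := hx
      show (P * Q - Q * P) (A x) = 0
      have := DFunLike.congr_fun hc.eq x
      simp only [ContinuousLinearMap.mul_apply] at this ⊢
      rw [this, hx', map_zero]
  have : x ∈ LinearMap.ker ((P * Q - Q * P : X →L[ℂ] X) : X →ₗ[ℂ] X) :=
    hcl (hw ▸ Submodule.mem_top)
  have : (P * Q - Q * P) x = 0 := this
  simpa [sub_eq_zero] using this

lemma key_cyc {A : X →L[ℂ] X} (hA : IsSelfAdjoint A) (w : X) (hw : cyc A w = ⊤)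
    (p v : X) (hv : v ∈ (cyc A p)ᗮ) (hle : (cyc A p)ᗮ ≤ cyc A v) : cyc A (p + v) = ⊤ := by
  haveI : CompleteSpace (cyc A p) := (cyc_isClosed A p).completeSpace_coe
  haveI : CompleteSpace (cyc A (p + v)) := (cyc_isClosed A (p + v)).completeSpace_coe
  set P := (cyc A p).starProjection with hP
  set Q := (cyc A (p + v)).starProjection with hQ
  have hc := comm_of_cyclic hA w hw P Q (isSelfAdjoint_starProjection _)
    (proj_comm hA _ (cyc_inv A p)) (proj_comm hA _ (cyc_inv A (p + v))) (p + v)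
  have h1 : Q (p + v) = p + v := Submodule.starProjection_eq_self_iff.2 (cyc_self A _)
  have h2 : P (p + v) = p := by
    rw [map_add, Submodule.starProjection_eq_self_iff.2 (cyc_self A _),
      (Submodule.starProjection_apply_eq_zero_iff _).2 hv, add_zero]
  rw [h1, h2] at hc
  have hp : p ∈ cyc A (p + v) := Submodule.starProjection_eq_self_iff.1 hc.symm
  have hv' : v ∈ cyc A (p + v) := by
    simpa using Submodule.sub_mem _ (cyc_self A (p + v)) hp
  have l1 := cyc_min A p _ (cyc_isClosed A (p + v)) hp (cyc_inv A _)
  have l2 := cyc_min A v _ (cyc_isClosed A (p + v)) hv' (cyc_inv A _)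
  rw [eq_top_iff, ← Submodule.sup_orthogonal_of_hasOrthogonalProjection (K := cyc A p)]
  exact sup_le l1 (hle.trans l2)

lemma main_aux (R Rα : X →L[ℂ] X) (p : X) (α : ℝ) (hsa : IsSelfAdjoint R)
    (hRα : ∀ x : X, Rα x = R x + ((α : ℂ) * ⟪p, x⟫_ℂ) • p) :
    cyc R p = cyc Rα p ∧ ((∃ v, cyc R v = ⊤) → (∃ v, cyc Rα v = ⊤) →
      ∃ v₂ : X, (∀ x ∈ cyc R p, ⟪x, v₂⟫_ℂ = 0) ∧ cyc R (p + v₂) = ⊤ ∧ cyc Rα (p + v₂) = ⊤) := by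
  have heq : cyc R p = cyc Rα p := by
    apply le_antisymm
    · refine cyc_min R p _ (cyc_isClosed _ _) (cyc_self _ _) fun x hx => ?_
      rw [← add_sub_cancel_right (R x) (((α : ℂ) * ⟪p, x⟫_ℂ) • p), ← hRα]
      exact Submodule.sub_mem _ (cyc_inv _ _ _ hx) (Submodule.smul_mem _ _ (cyc_self _ _))
    · refine cyc_min Rα p _ (cyc_isClosed _ _) (cyc_self _ _) fun x hx => ?_
      rw [hRα]
      exact Submodule.add_mem _ (cyc_inv _ _ _ hx) (Submodule.smul_mem _ _ (cyc_self _ _))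
  refine ⟨heq, ?_⟩
  rintro ⟨w, hw⟩ ⟨w', hw'⟩
  have hsym : ∀ x y, ⟪R x, y⟫_ℂ = ⟪x, R y⟫_ℂ :=
    (ContinuousLinearMap.isSelfAdjoint_iff_isSymmetric.1 hsa)
  have hsα : IsSelfAdjoint Rα := by
    rw [ContinuousLinearMap.isSelfAdjoint_iff_isSymmetric]
    intro x y
    simp only [ContinuousLinearMap.coe_coe, hRα, inner_add_left, inner_add_right, hsym,
      inner_smul_left, inner_smul_right, map_mul, Complex.conj_ofReal, inner_conj_symm]
    ring
  haveI : CompleteSpace (cyc R p) := (cyc_isClosed R p).completeSpace_coe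
  set K := cyc R p with hK
  set P := K.starProjection with hP
  have hPR : Commute P R := proj_comm hsa K (cyc_inv R p)
  have hv : w - P w ∈ Kᗮ := K.sub_starProjection_mem_orthogonal w
  set v := w - P w with hvdef
  have hle : Kᗮ ≤ cyc R v := by
    have h1 : cyc R w ≤ (cyc R v).comap ((1 - P : X →L[ℂ] X) : X →ₗ[ℂ] X) := by
      refine cyc_min R w _ ((cyc_isClosed R v).preimage (1 - P : X →L[ℂ] X).continuous) ?_ ?_
      · exact cyc_self R v
      · intro x hx
        have hx' : (1 - P : X →L[ℂ] X) x ∈ cyc R v := hx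
        show (1 - P : X →L[ℂ] X) (R x) ∈ cyc R v
        have hc : Commute (1 - P) R := (Commute.one_left R).sub_left hPR
        have := DFunLike.congr_fun hc.eq x
        simp only [ContinuousLinearMap.mul_apply] at this
        rw [this]
        exact cyc_inv _ _ _ hx'
    intro x hx
    have h2 : (1 - P : X →L[ℂ] X) x ∈ cyc R v := h1 (hw ▸ Submodule.mem_top)
    have h3 : P x = 0 := (Submodule.starProjection_apply_eq_zero_iff _).2 hx
    simpa [h3] using h2
  have hsub : cyc Rα v ≤ Kᗮ := cyc_min Rα v _ K.isClosed_orthogonal hv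
    (orth_inv hsα K (by rw [heq]; exact cyc_inv _ _))
  have hle2 : cyc R v ≤ cyc Rα v := by
    refine cyc_min R v _ (cyc_isClosed _ _) (cyc_self _ _) fun x hx => ?_
    have h0 : ⟪p, x⟫_ℂ = 0 := (Submodule.mem_orthogonal _ _).1 (hsub hx) p (cyc_self R p)
    have : R x = Rα x := by rw [hRα, h0]; simp
    rw [this]
    exact cyc_inv _ _ _ hx
  refine ⟨v, fun x hx => (Submodule.mem_orthogonal _ _).1 hv x hx, ?_, ?_⟩
  · exact key_cyc hsa w hw p v hv hle
  · exact key_cyc hsα w' hw' p v (heq ▸ hv) (heq ▸ hle.trans hle2)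

lemma cyc_top_iff (A : X →L[ℂ] X) (v : X) : cyc A v = ⊤ ↔
    closure ((Submodule.span ℂ (Set.range fun n : ℕ => (A ^ n) v) : Submodule ℂ X) : Set X)
      = Set.univ := by
  rw [← SetLike.coe_set_eq, Submodule.top_coe]; rfl

end aux



/-- **Cyclic subspaces under rank-one perturbation.** Let `R` be a bounded self-adjoint
operator on a complex Hilbert space and `Rα = R + α⟨·,p⟩p` a rank-one self-adjoint
perturbation. Then (1) the cyclic subspaces of `p` under `R` and under `Rα` coincide; and
(2) if both `R` and `Rα` have a cyclic vector, there is `v₂` orthogonal to `⟨p⟩_R` such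
that `p + v₂` is a common cyclic vector for `R` and `Rα`. -/
theorem rank_one_perturbation_cyclic
    {X : Type*} [NormedAddCommGroup X] [InnerProductSpace ℂ X] [CompleteSpace X]
    (R Rα : X →L[ℂ] X) (p : X) (α : ℝ)
    (hsa : IsSelfAdjoint R)
    (hRα : ∀ x : X, Rα x = R x + ((α : ℂ) * ⟪p, x⟫_ℂ) • p) :
    closure ((Submodule.span ℂ (Set.range fun n : ℕ => (R ^ n) p) : Submodule ℂ X) : Set X)
      = closure ((Submodule.span ℂ
          (Set.range fun n : ℕ => (Rα ^ n) p) : Submodule ℂ X) : Set X) ∧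
    ((∃ v : X, closure ((Submodule.span ℂ
          (Set.range fun n : ℕ => (R ^ n) v) : Submodule ℂ X) : Set X) = Set.univ) →
     (∃ v : X, closure ((Submodule.span ℂ
          (Set.range fun n : ℕ => (Rα ^ n) v) : Submodule ℂ X) : Set X) = Set.univ) →
     ∃ v₂ : X,
       (∀ x ∈ closure ((Submodule.span ℂ
            (Set.range fun n : ℕ => (R ^ n) p) : Submodule ℂ X) : Set X), ⟪x, v₂⟫_ℂ = 0) ∧
       closure ((Submodule.span ℂ
          (Set.range fun n : ℕ => (R ^ n) (p + v₂)) : Submodule ℂ X) : Set X) = Set.univ ∧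
       closure ((Submodule.span ℂ
          (Set.range fun n : ℕ => (Rα ^ n) (p + v₂)) : Submodule ℂ X) : Set X) = Set.univ) := by
  obtain ⟨h1, h2⟩ := main_aux R Rα p α hsa hRα
  refine ⟨congrArg (fun N : Submodule ℂ X => (N : Set X)) h1, ?_⟩
  simp only [cyc_top_iff] at h2
  exact h2
end

section
/- Let A, B, K be bounded linear operators on a complex Hilbert space X satisfying K∘A = B∘K, with ‖B‖ ≤ 1, with the range of K dense in X, and with A asymptotically stable (Aⁿ x → 0 for every x ∈ X). Then B is asymptotically stable: Bⁿ x → 0 for every x ∈ X. -/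
open Filter

/-- **Transfer of asymptotic stability through an intertwiner with dense range.**
If `K∘A = B∘K` with `‖B‖ ≤ 1`, `K` has dense range, and `A` is asymptotically stable
(`Aⁿx → 0` for all `x`), then `B` is asymptotically stable. -/
theorem asymptotically_stable_of_intertwined
    {X : Type*} [NormedAddCommGroup X] [InnerProductSpace ℂ X] [CompleteSpace X]
    (A B K : X →L[ℂ] X)
    (hKA : K.comp A = B.comp K)
    (hB : ‖B‖ ≤ 1)
    (hK : DenseRange K)
    (hA : ∀ x : X, Tendsto (fun n : ℕ => (A ^ n) x) atTop (nhds 0)) :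
    ∀ x : X, Tendsto (fun n : ℕ => (B ^ n) x) atTop (nhds 0) := by
  have hcomm : ∀ (n : ℕ) (y : X), K ((A ^ n) y) = (B ^ n) (K y) := by
    intro n
    induction n with
    | zero => intro y; simp
    | succ n ih =>
      intro y
      have h := DFunLike.congr_fun hKA y
      simp only [ContinuousLinearMap.comp_apply] at h
      rw [pow_succ, pow_succ, mul_apply_eq_comp, mul_apply_eq_comp,
        ih, h]
  have hle : ∀ (n : ℕ) (y : X), ‖(B ^ n) y‖ ≤ ‖y‖ := by
    intro n
    induction n with
    | zero => intro y; simp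
    | succ n ih =>
      intro y
      rw [pow_succ, mul_apply_eq_comp]
      refine (ih _).trans ?_
      simpa using B.le_of_opNorm_le hB y
  intro x
  rw [Metric.tendsto_atTop]
  intro ε hε
  obtain ⟨y, hy⟩ := hK.exists_dist_lt x (half_pos hε)
  have h1 : Tendsto (fun n : ℕ => K ((A ^ n) y)) atTop (nhds 0) := by
    have h := (K.continuous.tendsto 0).comp (hA y)
    rw [map_zero] at h
    exact h
  obtain ⟨N, hN⟩ := Metric.tendsto_atTop.1 h1 (ε / 2) (half_pos hε)
  refine ⟨N, fun n hn => ?_⟩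
  have h2 := hN n hn
  rw [dist_zero_right, hcomm] at h2
  rw [dist_eq_norm] at hy
  have h3 := hle n (x - K y)
  have h4 : (B ^ n) x = (B ^ n) (x - K y) + (B ^ n) (K y) := by
    rw [← map_add, sub_add_cancel]
  rw [dist_zero_right, h4]
  have h5 := norm_add_le ((B ^ n) (x - K y)) ((B ^ n) (K y))
  linarith
end

section
/- Let ρ, M, M̃ be as in the model context. Then there exists a unique bounded linear operator Q on L²(ρ) satisfying Q∘M^{1/2} = M̃^{1/2}, where M^{1/2} and M̃^{1/2} denote the positive square roots of M and M̃; Q is a contraction (‖Q‖ ≤ 1); the positive self-adjoint contraction 𝔖₀ := Q*∘Q does not have 1 as an eigenvalue (Ker(𝔖₀ − I) = {0}); and 𝔖₀ is asymptotically stable: (𝔖₀)ⁿ x → 0 for every x ∈ L²(ρ). -/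
open MeasureTheory Filter
open scoped InnerProductSpace ENNReal

section abs
variable {H : Type*} [NormedAddCommGroup H] [InnerProductSpace ℂ H] [CompleteSpace H]

theorem aux_stable (Q : H →L[ℂ] H) (hQ : ‖Q‖ ≤ 1)
    (hker : ∀ x, ((ContinuousLinearMap.adjoint Q).comp Q) x = x → x = 0) (x : H) :
    Tendsto (fun n : ℕ => (((ContinuousLinearMap.adjoint Q).comp Q) ^ n) x) atTop (nhds 0) := by
  set S := (ContinuousLinearMap.adjoint Q).comp Q with hS
  have hadj : ∀ y z, ⟪S y, z⟫_ℂ = ⟪Q y, Q z⟫_ℂ := by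
    intro y z
    simp [hS, ContinuousLinearMap.adjoint_inner_left]
  have hadj2 : ∀ y z, ⟪y, S z⟫_ℂ = ⟪Q y, Q z⟫_ℂ := by
    intro y z
    simp [hS, ContinuousLinearMap.adjoint_inner_right]
  have hQn : ∀ y, ‖Q y‖ ≤ ‖y‖ := fun y => by simpa using Q.le_of_opNorm_le hQ y
  have hQan : ∀ y, ‖(ContinuousLinearMap.adjoint Q) y‖ ≤ ‖y‖ := fun y => by
    simpa using (ContinuousLinearMap.adjoint Q).le_of_opNorm_le (c := 1) (by simpa using hQ) y
  have hSn : ∀ y, ‖S y‖ ≤ ‖Q y‖ := fun y => hQan _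
  have hpow : ∀ (n : ℕ) y, (S ^ (n+1)) y = S ((S ^ n) y) := by
    intro n y; rw [pow_succ']; rfl
  have hsw : ∀ (m n : ℕ), ⟪(S ^ m) x, (S ^ n) x⟫_ℂ = ⟪x, (S ^ (m + n)) x⟫_ℂ := by
    intro m
    induction m with
    | zero => intro n; simp
    | succ m ih =>
      intro n
      rw [hpow, hadj, ← hadj2, ← hpow, ih]
      congr 3; ring
  let a : ℕ → ℝ := fun n => (⟪x, (S ^ n) x⟫_ℂ).re
  have ha2 : ∀ k, a (2 * k) = ‖(S^k) x‖ ^ 2 := by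
    intro k
    simp only [a]
    rw [two_mul, ← hsw]
    exact inner_self_eq_norm_sq (𝕜 := ℂ) _
  have ha3 : ∀ k, a (2 * k + 1) = ‖Q ((S^k) x)‖ ^ 2 := by
    intro k
    simp only [a]
    rw [two_mul, add_assoc, ← hsw, hpow, hadj2]
    exact inner_self_eq_norm_sq (𝕜 := ℂ) _
  have hanti : Antitone a := by
    apply antitone_nat_of_succ_le
    intro n
    rcases Nat.even_or_odd' n with ⟨k, rfl | rfl⟩
    · rw [ha2, ha3]; gcongr; exact hQn _
    · rw [show 2 * k + 1 + 1 = 2 * (k+1) by ring, ha2, ha3, hpow]; gcongr; exact hSn _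
  have hnn : ∀ n, 0 ≤ a n := by
    intro n
    rcases Nat.even_or_odd' n with ⟨k, rfl | rfl⟩
    · rw [ha2]; positivity
    · rw [ha3]; positivity
  obtain ⟨l, hl⟩ : ∃ l, Tendsto a atTop (nhds l) :=
    ⟨_, tendsto_atTop_ciInf hanti ⟨0, by rintro _ ⟨n, rfl⟩; exact hnn n⟩⟩
  have hle : ∀ n, l ≤ a n := fun n => hanti.le_of_tendsto hl n
  have hdist : ∀ m n, ‖(S^m) x - (S^n) x‖^2 = a (2*m) - 2 * a (m+n) + a (2*n) := by
    intro m n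
    rw [@norm_sub_sq ℂ, hsw, ha2, ha2]; rfl
  have hc : CauchySeq (fun n => (S^n) x) := by
    apply cauchySeq_of_le_tendsto_0 (fun n => Real.sqrt (2 * (a (2*n) - l)))
    · intro n m N hn hm
      rw [dist_eq_norm]
      apply Real.le_sqrt_of_sq_le
      rw [hdist]
      have h1 := hanti (show 2 * N ≤ 2 * n by omega)
      have h2 := hanti (show 2 * N ≤ 2 * m by omega)
      have h3 := hle (n+m)
      linarith
    · have : Tendsto (fun n : ℕ => a (2*n)) atTop (nhds l) :=
        hl.comp (tendsto_id.const_mul_atTop' (by norm_num))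
      have := ((this.sub_const l).const_mul 2).sqrt
      simpa using this
  obtain ⟨y, hy⟩ := cauchySeq_tendsto_of_complete hc
  have h1 : Tendsto (fun n => (S^(n+1)) x) atTop (nhds (S y)) := by
    simp only [hpow]
    exact (S.continuous.tendsto y).comp hy
  have h2 := hy.comp (tendsto_add_atTop_nat 1)
  have := hker y (tendsto_nhds_unique h1 h2)
  rwa [this] at hy

theorem aux_main (one w : H) (M Mt Ms Mts : H →L[ℂ] H)
    (hinj : ∀ f, M f = 0 → f = 0) (hw : M w = one)
    (hcyc : ∀ g, (∀ n : ℕ, ⟪one, (M ^ n) g⟫_ℂ = 0) → g = 0)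
    (hMt_pos : Mt.IsPositive)
    (hMt_sq : ∀ f, Mt (Mt f) = M (M f) - ⟪one, f⟫_ℂ • one)
    (hMs_pos : Ms.IsPositive) (hMs_sq : ∀ f, Ms (Ms f) = M f)
    (hMts_pos : Mts.IsPositive) (hMts_sq : ∀ f, Mts (Mts f) = Mt f) :
    (∃! Q : H →L[ℂ] H, Q.comp Ms = Mts) ∧
    ∀ Q : H →L[ℂ] H, Q.comp Ms = Mts →
      ‖Q‖ ≤ 1 ∧
      (∀ x : H, ((ContinuousLinearMap.adjoint Q).comp Q) x = x → x = 0) ∧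
      (∀ x : H,
        Tendsto (fun n : ℕ => (((ContinuousLinearMap.adjoint Q).comp Q) ^ n) x)
          atTop (nhds 0)) := by
  have hs : ∀ x y, ⟪Ms x, y⟫_ℂ = ⟪x, Ms y⟫_ℂ := fun x y => hMs_pos.isSymmetric x y
  have hts : ∀ x y, ⟪Mts x, y⟫_ℂ = ⟪x, Mts y⟫_ℂ := fun x y => hMts_pos.isSymmetric x y
  have hsinj : ∀ f, Ms f = 0 → f = 0 := fun f hf => hinj f (by rw [← hMs_sq, hf, map_zero])
  have hMpos : M.IsPositive := by
    have : M = Ms ∘L (1 : H →L[ℂ] H) ∘L (ContinuousLinearMap.adjoint Ms) := by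
      rw [hMs_pos.isSelfAdjoint.adjoint_eq]
      ext x; simp [hMs_sq]
    rw [this]
    exact ContinuousLinearMap.isPositive_one.conj_adjoint Ms
  have hle2 : Mt * Mt ≤ M * M := by
    rw [ContinuousLinearMap.le_def, ContinuousLinearMap.isPositive_iff_complex]
    intro x
    have : (M * M - Mt * Mt) x = ⟪one, x⟫_ℂ • one := by
      simp [hMt_sq]
    rw [this, inner_smul_left, RCLike.conj_mul]
    norm_cast
    simp
  have hle : Mt ≤ M := by
    have h := CFC.sqrt_le_sqrt _ _ hle2
    rwa [CFC.sqrt_mul_self _ ((ContinuousLinearMap.nonneg_iff_isPositive _).2 hMt_pos),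
      CFC.sqrt_mul_self _ ((ContinuousLinearMap.nonneg_iff_isPositive _).2 hMpos)] at h
  have hnorm : ∀ x, ‖Mts x‖ ≤ 1 * ‖Ms x‖ := by
    intro x
    rw [one_mul]
    apply le_of_sq_le_sq _ (norm_nonneg _)
    have := (ContinuousLinearMap.le_def _ _).1 hle |>.re_inner_nonneg_right x
    rw [sub_apply, inner_sub_right, ← hMs_sq, ← hMts_sq, ← hs, ← hts, map_sub,
      inner_self_eq_norm_sq, inner_self_eq_norm_sq] at this
    linarith
  have hdense : DenseRange Ms := by
    have h1 : (Ms.range)ᗮ = ⊥ := by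
      rw [Submodule.eq_bot_iff]
      intro y hy
      apply hsinj
      rw [← inner_self_eq_zero (𝕜 := ℂ), ← hs]
      exact (Submodule.mem_orthogonal _ _).1 hy (Ms (Ms y)) ⟨Ms y, rfl⟩
    have := (Submodule.topologicalClosure_eq_top_iff).2 h1
    exact (Submodule.dense_iff_topologicalClosure_eq_top).2 this
  have hext : ∀ Q Q' : H →L[ℂ] H, (∀ f, Q (Ms f) = Q' (Ms f)) → Q = Q' := by
    intro Q Q' h
    apply ContinuousLinearMap.coeFn_injective
    exact hdense.equalizer Q.continuous Q'.continuous (funext h)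
  refine ⟨⟨(Mts : H →ₗ[ℂ] H).extendOfNorm (Ms : H →ₗ[ℂ] H), ?_, ?_⟩, ?_⟩
  · ext x
    exact LinearMap.extendOfNorm_eq (f := (Mts : H →ₗ[ℂ] H)) (e := (Ms : H →ₗ[ℂ] H)) hdense ⟨1, hnorm⟩ x
  · intro Q hQ
    apply hext
    intro f
    rw [← ContinuousLinearMap.comp_apply, hQ]
    exact (LinearMap.extendOfNorm_eq (f := (Mts : H →ₗ[ℂ] H)) (e := (Ms : H →ₗ[ℂ] H)) hdense ⟨1, hnorm⟩ f).symm
  intro Q hQ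
  have hQ' : ∀ x, Q (Ms x) = Mts x := fun x => by rw [← hQ]; rfl
  have hQ1 : ‖Q‖ ≤ 1 := by
    apply Q.opNorm_le_bound zero_le_one
    intro x
    refine hdense.induction_on (p := fun x => ‖Q x‖ ≤ 1 * ‖x‖) x
      (isClosed_le (by fun_prop) (by fun_prop)) ?_
    intro y
    rw [hQ']; exact hnorm y
  have hker : ∀ x, ((ContinuousLinearMap.adjoint Q).comp Q) x = x → x = 0 := by
    set S := (ContinuousLinearMap.adjoint Q).comp Q with hS
    have hSs : ∀ y z, ⟪S y, z⟫_ℂ = ⟪y, S z⟫_ℂ := by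
      intro y z
      simp [hS, ContinuousLinearMap.adjoint_inner_left, ContinuousLinearMap.adjoint_inner_right]
    have hMtS : ∀ f, Ms (S (Ms f)) = Mt f := by
      intro f
      apply ext_inner_left ℂ
      intro z
      rw [← hs, ← hMts_sq, ← hts, ← hQ', ← hQ']
      simp [hS, ContinuousLinearMap.adjoint_inner_right]
    let v := Ms w
    have hv : Ms v = one := by rw [← hw, ← hMs_sq]
    have hid : ∀ x, M x - S (M (S x)) = ⟪v, x⟫_ℂ • v := by
      intro x
      refine hdense.induction_on (p := fun x => M x - S (M (S x)) = ⟪v, x⟫_ℂ • v) x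
        (isClosed_eq (by fun_prop) (by fun_prop)) ?_
      intro f
      rw [← sub_eq_zero]
      apply hsinj
      rw [map_sub, map_sub, map_smul, hv, ← hs, hv, ← hMs_sq (S _), hMtS, hMtS, hMt_sq,
        ← hMs_sq (Ms f), hMs_sq f, hMs_sq]
      abel
    have hstep : ∀ x, S x = x → ⟪v, x⟫_ℂ = 0 ∧ S (M x) = M x := by
      intro x hx
      have h1 := hid x
      rw [hx] at h1
      have h2 : ⟪v, x⟫_ℂ = 0 := by
        have := congrArg (fun z => ⟪x, z⟫_ℂ) h1
        simp only [inner_sub_right, ← hSs, hx, sub_self, inner_smul_right] at this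
        rcases mul_eq_zero.1 this.symm with h | h
        · exact h
        · exact inner_eq_zero_symm.1 h
      refine ⟨h2, ?_⟩
      rw [h2, zero_smul, sub_eq_zero] at h1
      exact h1.symm
    intro x hx
    have hn : ∀ n : ℕ, S ((M ^ n) x) = (M ^ n) x := by
      intro n
      induction n with
      | zero => simpa using hx
      | succ n ih => rw [pow_succ']; exact (hstep _ ih).2
    apply hsinj
    apply hcyc
    intro n
    have hcomm : Commute Ms (M ^ n) := by
      apply Commute.pow_right
      ext z
      change Ms (M z) = M (Ms z)
      rw [← hMs_sq, ← hMs_sq]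
    have h3 : (M ^ n) (Ms x) = Ms ((M ^ n) x) := by
      have := congrArg (fun T : H →L[ℂ] H => T x) hcomm.eq
      exact this.symm
    rw [h3, ← hv, hs, hMs_sq]
    exact (hstep _ (hstep _ (hn n)).2).1
  exact ⟨hQ1, hker, aux_stable Q hQ1 hker⟩
end abs

theorem aux_pow (ρ : Measure ℝ) (M : Lp ℂ 2 ρ →L[ℂ] Lp ℂ 2 ρ)
    (hM : ∀ f : Lp ℂ 2 ρ, ∀ᵐ s ∂ρ, (M f : ℝ → ℂ) s = (s : ℂ) * (f : ℝ → ℂ) s)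
    (g : Lp ℂ 2 ρ) (n : ℕ) : ∀ᵐ s ∂ρ, ((M ^ n) g : ℝ → ℂ) s = (s : ℂ) ^ n * (g : ℝ → ℂ) s := by
  induction n with
  | zero => simp
  | succ n ih =>
    filter_upwards [ih, hM ((M ^ n) g)] with s h1 h2
    rw [pow_succ' M]
    change (M ((M ^ n) g) : ℝ → ℂ) s = _
    rw [h2, h1]; ring

theorem aux_cyc (ρ : Measure ℝ) [IsFiniteMeasure ρ]
    (hcarr : ρ {s : ℝ | s ≤ 0} = 0)
    (hbddsupp : ∃ b : ℝ, ρ {s : ℝ | b < s} = 0)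
    (one : Lp ℂ 2 ρ)
    (hone : ∀ᵐ s ∂ρ, (one : ℝ → ℂ) s = 1)
    (M : Lp ℂ 2 ρ →L[ℂ] Lp ℂ 2 ρ)
    (hM : ∀ f : Lp ℂ 2 ρ, ∀ᵐ s ∂ρ, (M f : ℝ → ℂ) s = (s : ℂ) * (f : ℝ → ℂ) s)
    (g : Lp ℂ 2 ρ) (hg : ∀ n : ℕ, ⟪one, (M ^ n) g⟫_ℂ = 0) : g = 0 := by
  obtain ⟨b, hb⟩ := hbddsupp
  have hpos : ∀ᵐ s ∂ρ, 0 < s := by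
    rw [ae_iff]; simpa using hcarr
  have hub : ∀ᵐ s ∂ρ, s ≤ b := by
    rw [ae_iff]; simpa using hb
  have hint : ∀ f : Lp ℂ 2 ρ, Integrable (f : ℝ → ℂ) ρ := fun f =>
    (Lp.memLp f).integrable (by norm_num)
  have hmom_int : ∀ n : ℕ, Integrable (fun s : ℝ => (s : ℂ) ^ n * (g : ℝ → ℂ) s) ρ := fun n =>
    (hint ((M ^ n) g)).congr (aux_pow ρ M hM g n)
  have hmom : ∀ n : ℕ, ∫ s : ℝ, (s : ℂ) ^ n * (g : ℝ → ℂ) s ∂ρ = 0 := by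
    intro n
    rw [← hg n, L2.inner_def]
    apply integral_congr_ae
    filter_upwards [hone, aux_pow ρ M hM g n] with s h1 h2
    rw [h1, h2]; simp
  have hpoly : ∀ p : Polynomial ℝ, Integrable (fun s : ℝ => p.eval s • (g : ℝ → ℂ) s) ρ ∧
      ∫ s : ℝ, p.eval s • (g : ℝ → ℂ) s ∂ρ = 0 := by
    intro p
    have : (fun s : ℝ => p.eval s • (g : ℝ → ℂ) s) = fun s : ℝ => ∑ i ∈ Finset.range (p.natDegree + 1),
        (p.coeff i : ℂ) * ((s : ℂ) ^ i * (g : ℝ → ℂ) s) := by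
      ext s
      rw [Polynomial.eval_eq_sum_range, Finset.sum_smul]
      apply Finset.sum_congr rfl
      intro i _
      simp [mul_assoc]
    rw [this]
    refine ⟨integrable_finsetSum _ fun i _ => (hmom_int i).const_mul _, ?_⟩
    rw [integral_finsetSum _ fun i _ => (hmom_int i).const_mul _]
    simp [integral_const_mul, hmom]
  have key : ∀ᵐ s ∂ρ, (g : ℝ → ℂ) s = 0 := by
    apply ae_eq_zero_of_integral_contDiff_smul_eq_zero (hint g).locallyIntegrable
    intro φ hφ hcs
    have hφi : Integrable (fun s => φ s • (g : ℝ → ℂ) s) ρ := by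
      obtain ⟨C, hC⟩ := hφ.continuous.bounded_above_of_compact_support hcs
      exact (hint g).bdd_smul C hφ.continuous.aestronglyMeasurable (ae_of_all _ hC)
    rw [← norm_le_zero_iff]
    set I := ∫ s, ‖(g : ℝ → ℂ) s‖ ∂ρ with hI
    have hI0 : 0 ≤ I := integral_nonneg fun _ => norm_nonneg _
    have hbd : ∀ ε > 0, ‖∫ s, φ s • (g : ℝ → ℂ) s ∂ρ‖ ≤ ε * I := by
      intro ε hε
      obtain ⟨p, hp⟩ := exists_polynomial_near_of_continuousOn 0 b φ hφ.continuous.continuousOn ε hε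
      have h1 : ∫ s, φ s • (g : ℝ → ℂ) s ∂ρ = ∫ s, (φ s • (g : ℝ → ℂ) s - p.eval s • (g : ℝ → ℂ) s) ∂ρ := by
        rw [integral_sub hφi (hpoly p).1, (hpoly p).2, sub_zero]
      rw [h1, hI, ← integral_const_mul]
      apply norm_integral_le_of_norm_le ((hint g).norm.const_mul _)
      filter_upwards [hpos, hub] with s h2 h3
      rw [← sub_smul, norm_smul]
      gcongr
      rw [Real.norm_eq_abs, abs_sub_comm]
      exact (hp s ⟨h2.le, h3⟩).le
    apply le_of_forall_pos_le_add
    intro ε hε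
    refine (hbd (ε / (I + 1)) (by positivity)).trans ?_
    rw [zero_add, div_mul_eq_mul_div, div_le_iff₀ (by positivity)]
    nlinarith
  exact (Lp.eq_zero_iff_ae_eq_zero).2 key

/-- **The symmetrized operator `𝔖₀ = Q*Q` is asymptotically stable.** In the model
`L²(ρ)` (with `ρ` a finite measure of bounded support on `(0,∞)` satisfying
`∫ s⁻² dρ ≤ 1`, `M` multiplication by `s`, and `M̃ = (M² − ⟨·,𝟙⟩𝟙)^{1/2}`), there is a
unique bounded operator `Q` with `Q∘M^{1/2} = M̃^{1/2}`; it is a contraction, the positive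
self-adjoint contraction `𝔖₀ = Q*Q` does not have `1` as an eigenvalue, and `𝔖₀` is
asymptotically stable. -/
theorem symmetrization_asymptotically_stable
    (ρ : Measure ℝ) [IsFiniteMeasure ρ]
    (hcarr : ρ {s : ℝ | s ≤ 0} = 0)
    (hbddsupp : ∃ b : ℝ, ρ {s : ℝ | b < s} = 0)
    (hnorm : ∫⁻ s, ENNReal.ofReal (s⁻¹ ^ 2) ∂ρ ≤ 1)
    (one : Lp ℂ 2 ρ)
    (hone : ∀ᵐ s ∂ρ, (one : ℝ → ℂ) s = 1)
    (M Mt Ms Mts : Lp ℂ 2 ρ →L[ℂ] Lp ℂ 2 ρ)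
    (hM : ∀ f : Lp ℂ 2 ρ, ∀ᵐ s ∂ρ, (M f : ℝ → ℂ) s = (s : ℂ) * (f : ℝ → ℂ) s)
    (hMt_pos : Mt.IsPositive)
    (hMt_sq : ∀ f, Mt (Mt f) = M (M f) - ⟪one, f⟫_ℂ • one)
    (hMs_pos : Ms.IsPositive) (hMs_sq : ∀ f, Ms (Ms f) = M f)
    (hMts_pos : Mts.IsPositive) (hMts_sq : ∀ f, Mts (Mts f) = Mt f) :
    (∃! Q : Lp ℂ 2 ρ →L[ℂ] Lp ℂ 2 ρ, Q.comp Ms = Mts) ∧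
    ∀ Q : Lp ℂ 2 ρ →L[ℂ] Lp ℂ 2 ρ, Q.comp Ms = Mts →
      ‖Q‖ ≤ 1 ∧
      (∀ x : Lp ℂ 2 ρ, ((ContinuousLinearMap.adjoint Q).comp Q) x = x → x = 0) ∧
      (∀ x : Lp ℂ 2 ρ,
        Tendsto (fun n : ℕ => (((ContinuousLinearMap.adjoint Q).comp Q) ^ n) x)
          atTop (nhds 0)) := by
  have hpos : ∀ᵐ s ∂ρ, 0 < s := by
    rw [ae_iff]; simpa using hcarr
  have hw : MemLp (fun s : ℝ => ((s⁻¹ : ℝ) : ℂ)) 2 ρ := by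
    refine ⟨by fun_prop, ?_⟩
    rw [eLpNorm_lt_top_iff_lintegral_rpow_enorm_lt_top (by norm_num) (by norm_num)]
    refine lt_of_le_of_lt (le_of_eq_of_le ?_ hnorm) ENNReal.one_lt_top
    congr 1
    ext s
    rw [ENNReal.toReal_ofNat, ENNReal.rpow_ofNat, ← ofReal_norm,
      ← ENNReal.ofReal_pow (norm_nonneg _), Complex.norm_real, Real.norm_eq_abs, sq_abs]
  refine aux_main one hw.toLp M Mt Ms Mts ?_ ?_ (aux_cyc ρ hcarr hbddsupp one hone M hM)
    hMt_pos hMt_sq hMs_pos hMs_sq hMts_pos hMts_sq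
  · intro f hf
    rw [Lp.eq_zero_iff_ae_eq_zero] at hf ⊢
    filter_upwards [hf, hM f, hpos] with s h1 h2 h3
    rw [h2] at h1
    have : (s : ℂ) ≠ 0 := by exact_mod_cast h3.ne'
    simpa [this] using h1
  · apply Lp.ext
    filter_upwards [hM hw.toLp, hw.coeFn_toLp, hone, hpos] with s h1 h2 h3 h4
    rw [h1, h2, h3]
    have : (s : ℂ) ≠ 0 := by exact_mod_cast h4.ne'
    push_cast
    exact mul_inv_cancel₀ this
end

section
/- Let ρ, M, M̃ be as in the model context. Then there exists a unique bounded linear operator T on L²(ρ) satisfying T∘M = M̃ (T is the closure of M̃ M⁻¹ defined on the dense set Ran M); T is a contraction; and T is asymptotically stable: Tⁿ x → 0 for every x ∈ L²(ρ). -/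
open MeasureTheory Filter
open scoped InnerProductSpace ENNReal

section abs
variable {H : Type*} [NormedAddCommGroup H] [InnerProductSpace ℂ H] [CompleteSpace H]

lemma aux_fix (T : H →L[ℂ] H) (hT : ‖T‖ ≤ 1) (x : H) (hx : T x = x) :
    ContinuousLinearMap.adjoint T x = x := by
  have h1 : ‖ContinuousLinearMap.adjoint T x‖ ≤ ‖x‖ := by
    have := (ContinuousLinearMap.adjoint T).le_opNorm x
    rw [LinearIsometryEquiv.norm_map] at this
    nlinarith [norm_nonneg x]
  have h2 := @norm_sub_sq ℂ H _ _ _ (ContinuousLinearMap.adjoint T x) x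
  rw [ContinuousLinearMap.adjoint_inner_left, hx, inner_self_eq_norm_sq] at h2
  have h3 : ‖ContinuousLinearMap.adjoint T x - x‖ ^ 2 ≤ 0 := by
    nlinarith [norm_nonneg (ContinuousLinearMap.adjoint T x)]
  have h4 : ‖ContinuousLinearMap.adjoint T x - x‖ = 0 := by
    have := sq_nonneg ‖ContinuousLinearMap.adjoint T x - x‖
    exact pow_eq_zero_iff (two_ne_zero) |>.1 (le_antisymm h3 this)
  exact sub_eq_zero.1 (norm_eq_zero.1 h4)

lemma aux_pow_le (T : H →L[ℂ] H) (hT : ‖T‖ ≤ 1) (n : ℕ) (x : H) : ‖(T ^ n) x‖ ≤ ‖x‖ := by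
  induction n with
  | zero => simp
  | succ n ih =>
    rw [pow_succ']
    have := T.le_opNorm ((T ^ n) x)
    simp only [mul_apply_eq_comp]
    nlinarith [norm_nonneg ((T ^ n) x)]

lemma aux_dense (T : H →L[ℂ] H) (hT : ‖T‖ ≤ 1) (s : Set H) (hs : Dense s)
    (h : ∀ x ∈ s, Tendsto (fun n : ℕ => (T ^ n) x) atTop (nhds 0)) (x : H) :
    Tendsto (fun n : ℕ => (T ^ n) x) atTop (nhds 0) := by
  rw [Metric.tendsto_atTop]
  intro ε hε
  obtain ⟨y, hy, hxy⟩ := hs.exists_dist_lt x (half_pos hε)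
  obtain ⟨N, hN⟩ := Metric.tendsto_atTop.1 (h y hy) (ε / 2) (half_pos hε)
  refine ⟨N, fun n hn => ?_⟩
  have h1 := hN n hn
  have h2 := aux_pow_le T hT n (x - y)
  rw [dist_eq_norm] at hxy
  rw [dist_zero_right] at h1 ⊢
  have : (T ^ n) x = (T ^ n) (x - y) + (T ^ n) y := by simp
  rw [this]
  linarith [norm_add_le ((T ^ n) (x - y)) ((T ^ n) y)]

lemma aux_diff (M Mt T : H →L[ℂ] H) (hM : M.IsPositive) (hMt : Mt.IsPositive)
    (hT : ‖T‖ ≤ 1) (R : H →L[ℂ] H) (hRdef : R = ContinuousLinearMap.adjoint T)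
    (h1 : ∀ x, T (M x) = Mt x) (h2 : ∀ x, M (R x) = Mt x) (x : H) :
    Tendsto (fun n : ℕ => (T ^ n) (M (x - R x))) atTop (nhds 0) := by
  have hRn : ‖R‖ ≤ 1 := by rw [hRdef, LinearIsometryEquiv.norm_map]; exact hT
  have hTR : ∀ u v, ⟪u, R v⟫_ℂ = ⟪T u, v⟫_ℂ := fun u v => by
    rw [hRdef, ContinuousLinearMap.adjoint_inner_right]
  have hRs : ∀ n (u : H), (R ^ (n+1)) u = R ((R ^ n) u) := fun n u => by
    rw [pow_succ']; rfl
  have hTs : ∀ n (u : H), (T ^ (n+1)) u = T ((T ^ n) u) := fun n u => by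
    rw [pow_succ']; rfl
  have key : ∀ j i, ⟪M ((R ^ i) x), (R ^ j) x⟫_ℂ = ⟪M ((R ^ (i + j)) x), x⟫_ℂ := by
    intro j
    induction j with
    | zero => intro i; simp
    | succ j ih =>
      intro i
      rw [hRs, hTR, h1, ← h2, ← hRs, ih]
      congr 4; ring
  have hcomm : ∀ n u, (T ^ n) (M u) = M ((R ^ n) u) := by
    intro n u
    induction n with
    | zero => simp
    | succ n ih => rw [hTs, ih, h1, ← h2, ← hRs]
  set a : ℕ → ℝ := fun n => RCLike.re ⟪M ((R ^ n) x), x⟫_ℂ with ha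
  set d : ℕ → ℝ := fun n => a n - 2 * a (n + 1) + a (n + 2) with hd
  have hy : ∀ k, (R ^ k) (x - R x) = (R ^ k) x - (R ^ (k+1)) x := by
    intro k
    rw [map_sub, pow_succ]; rfl
  have heven : ∀ k, RCLike.re ⟪M ((R ^ k) (x - R x)), (R ^ k) (x - R x)⟫_ℂ = d (2 * k) := by
    intro k
    rw [hy]
    simp only [map_sub, inner_sub_left, inner_sub_right, key, hd, ha]
    rw [show k + k = 2 * k by ring, show k + (k + 1) = 2 * k + 1 by ring,
      show k + 1 + k = 2 * k + 1 by ring, show k + 1 + (k + 1) = 2 * k + 2 by ring]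
    ring
  have hodd : ∀ k, RCLike.re ⟪Mt ((R ^ k) (x - R x)), (R ^ k) (x - R x)⟫_ℂ = d (2 * k + 1) := by
    intro k
    rw [← h2, ← hRs, hy, hy]
    simp only [map_sub, inner_sub_left, inner_sub_right, key, hd, ha]
    rw [show k + 1 + k = 2 * k + 1 by ring, show k + 1 + 1 + k = 2 * k + 2 by ring,
      show k + 1 + (k + 1) = 2 * k + 2 by ring, show k + 1 + 1 + (k + 1) = 2 * k + 3 by ring,
      show 2 * k + 1 + 1 = 2 * k + 2 by ring, show 2 * k + 1 + 2 = 2 * k + 3 by ring]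
    ring
  have hd0 : ∀ n, 0 ≤ d n := by
    intro n
    rcases Nat.even_or_odd' n with ⟨k, rfl | rfl⟩
    · rw [← heven]; exact hM.re_inner_nonneg_left _
    · rw [← hodd]; exact hMt.re_inner_nonneg_left _
  have hab : ∀ n, |a n| ≤ ‖M‖ * ‖x‖ * ‖x‖ := by
    intro n
    calc |a n| ≤ ‖⟪M ((R ^ n) x), x⟫_ℂ‖ := RCLike.abs_re_le_norm _
      _ ≤ ‖M ((R ^ n) x)‖ * ‖x‖ := norm_inner_le_norm _ _
      _ ≤ ‖M‖ * ‖x‖ * ‖x‖ := by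
        gcongr
        exact (M.le_opNorm _).trans (by gcongr; exact aux_pow_le R hRn n x)
  have hsum : ∀ N, ∑ n ∈ Finset.range N, d n = a 0 - a 1 - a N + a (N + 1) := by
    intro N
    induction N with
    | zero => simp
    | succ N ih => rw [Finset.sum_range_succ, ih]; simp only [hd]; ring
  have hsm : Summable d := by
    refine summable_of_sum_range_le (c := 4 * (‖M‖ * ‖x‖ * ‖x‖)) hd0 fun N => ?_
    rw [hsum]
    have := fun n => abs_le.1 (hab n)
    linarith [(this 0).2, (this 1).1, (this N).1, (this (N+1)).2]
  have hdt : Tendsto (fun k => d (2 * k)) atTop (nhds 0) :=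
    hsm.tendsto_atTop_zero.comp (tendsto_id.const_mul_atTop' (by norm_num))
  obtain ⟨S, hS⟩ := CStarAlgebra.nonneg_iff_eq_star_mul_self.1
    ((ContinuousLinearMap.nonneg_iff_isPositive M).2 hM)
  have hMS : ∀ u, M u = (ContinuousLinearMap.adjoint S) (S u) := fun u => by rw [hS]; rfl
  have hSq : ∀ k, ‖S ((R ^ k) (x - R x))‖ ^ 2 = d (2 * k) := by
    intro k
    rw [← heven, hMS, ContinuousLinearMap.adjoint_inner_left, inner_self_eq_norm_sq]
  have hSt : Tendsto (fun k => S ((R ^ k) (x - R x))) atTop (nhds 0) := by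
    rw [tendsto_zero_iff_norm_tendsto_zero]
    have := hdt.sqrt
    simpa [← hSq, Real.sqrt_sq] using this
  have := ((ContinuousLinearMap.adjoint S).continuous.tendsto 0).comp hSt
  simp only [map_zero] at this
  refine this.congr fun k => ?_
  rw [hcomm, hMS]; rfl

lemma aux_range (A : H →L[ℂ] H) (h : ∀ y, ContinuousLinearMap.adjoint A y = 0 → y = 0) :
    DenseRange A := by
  have : A.rangeᗮ = ⊥ := by
    rw [ContinuousLinearMap.orthogonal_range, eq_bot_iff]
    intro y hy
    exact h y hy
  have := (Submodule.topologicalClosure_eq_top_iff).2 this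
  have := Submodule.dense_iff_topologicalClosure_eq_top.2 this
  exact this

theorem aux_stable_s8 (M Mt T : H →L[ℂ] H) (hM : M.IsPositive) (hMt : Mt.IsPositive)
    (hMd : DenseRange M)
    (hT : ‖T‖ ≤ 1) (hTM : T.comp M = Mt)
    (hfix : ∀ x, T x = x → x = 0) (x : H) :
    Tendsto (fun n : ℕ => (T ^ n) x) atTop (nhds 0) := by
  have h1 : ∀ x, T (M x) = Mt x := fun x => by rw [← hTM]; rfl
  have h2 : ∀ x, M (ContinuousLinearMap.adjoint T x) = Mt x := fun x => by
    have := congrArg ContinuousLinearMap.adjoint hTM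
    rw [ContinuousLinearMap.adjoint_comp, hM.isSelfAdjoint.adjoint_eq,
      hMt.isSelfAdjoint.adjoint_eq] at this
    rw [← this]; rfl
  have hd : DenseRange (ContinuousLinearMap.id ℂ H - T) := by
    apply aux_range
    intro y hy
    have e : ContinuousLinearMap.adjoint T y = y := by
      rw [map_sub] at hy
      simp only [sub_apply] at hy
      rw [ContinuousLinearMap.adjoint_id, ContinuousLinearMap.id_apply, sub_eq_zero] at hy
      exact hy.symm
    have e' := aux_fix (ContinuousLinearMap.adjoint T)
      (by rw [LinearIsometryEquiv.norm_map]; exact hT) y e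
    rw [ContinuousLinearMap.adjoint_adjoint] at e'
    exact hfix y e'
  refine aux_dense T hT _ (hd.comp hMd (ContinuousLinearMap.continuous _)) ?_ x
  rintro _ ⟨u, rfl⟩
  have := aux_diff M Mt T hM hMt hT _ rfl h1 h2 u
  rw [map_sub, h2, ← h1] at this
  exact this
end abs

lemma aux_moment (ρ : Measure ℝ) [IsFiniteMeasure ρ]
    (b : ℝ) (hab : ∀ᵐ s ∂ρ, s ∈ Set.Icc 0 b) (x : Lp ℂ 2 ρ)
    (hp : ∀ p : Polynomial ℝ, ∫ s, ((p.eval s : ℝ) : ℂ) * x s ∂ρ = 0)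
    (hpi : ∀ p : Polynomial ℝ, Integrable (fun s => ((p.eval s : ℝ) : ℂ) * x s) ρ) : x = 0 := by
  have hxi : Integrable (fun s => x s) ρ := by simpa using hpi 1
  have hbi : ∀ g : ℝ → ℝ, Continuous g → (∃ C, ∀ s, |g s| ≤ C) →
      Integrable (fun s => ((g s : ℝ) : ℂ) * x s) ρ := by
    rintro g hg ⟨C, hC⟩
    refine hxi.bdd_mul (c := C) ?_ ?_
    · exact (Complex.continuous_ofReal.comp hg).aestronglyMeasurable
    · exact Eventually.of_forall fun s => by simpa using hC s
  have hc : ∀ g : ℝ → ℝ, Continuous g → (∃ C, ∀ s, |g s| ≤ C) →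
      ∫ s, ((g s : ℝ) : ℂ) * x s ∂ρ = 0 := by
    intro g hg hb
    have hle : ∀ ε > 0, ‖∫ s, ((g s : ℝ) : ℂ) * x s ∂ρ‖ ≤ ε * ∫ s, ‖x s‖ ∂ρ := by
      intro ε hε
      obtain ⟨p, hpg⟩ := exists_polynomial_near_of_continuousOn 0 b g hg.continuousOn ε hε
      have e : ∫ s, ((g s : ℝ) : ℂ) * x s ∂ρ
          = ∫ s, (((g s : ℝ) : ℂ) * x s - ((p.eval s : ℝ) : ℂ) * x s) ∂ρ := by
        rw [integral_sub (hbi g hg hb) (hpi p), hp, sub_zero]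
      rw [e, ← integral_const_mul]
      refine norm_integral_le_of_norm_le (hxi.norm.const_mul ε) ?_
      filter_upwards [hab] with s hs
      rw [← sub_mul, norm_mul, ← Complex.ofReal_sub, Complex.norm_real, Real.norm_eq_abs, abs_sub_comm]
      gcongr
      exact (hpg s hs).le
    have h0 : ‖∫ s, ((g s : ℝ) : ℂ) * x s ∂ρ‖ ≤ 0 := by
      have ht : Tendsto (fun ε : ℝ => ε * ∫ s, ‖x s‖ ∂ρ) (nhdsWithin 0 (Set.Ioi 0)) (nhds 0) := by
        have : Tendsto (fun ε : ℝ => ε * ∫ s, ‖x s‖ ∂ρ) (nhds 0) (nhds (0 * ∫ s, ‖x s‖ ∂ρ)) :=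
          tendsto_id.mul_const _
        rw [zero_mul] at this
        exact this.mono_left nhdsWithin_le_nhds
      refine ge_of_tendsto ht ?_
      filter_upwards [self_mem_nhdsWithin] with ε hε using hle ε hε
    exact norm_le_zero_iff.1 h0
  have hd := BoundedContinuousFunction.toLp_denseRange (p := 2) (α := ℝ) (E := ℂ) ρ ℂ (by norm_num)
  refine hd.eq_zero_of_inner_left ℂ ?_
  intro g
  have hgb : ∀ s, ‖g s‖ ≤ ‖g‖ := g.norm_coe_le_norm
  have hre : ∃ C, ∀ s, |(g s).re| ≤ C := ⟨‖g‖, fun s => (Complex.abs_re_le_norm _).trans (hgb s)⟩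
  have him : ∃ C, ∀ s, |(g s).im| ≤ C := ⟨‖g‖, fun s => (Complex.abs_im_le_norm _).trans (hgb s)⟩
  have cre : Continuous fun s => (g s).re := Complex.continuous_re.comp g.continuous
  have cim : Continuous fun s => (g s).im := Complex.continuous_im.comp g.continuous
  have e : ⟪BoundedContinuousFunction.toLp 2 ρ ℂ g, x⟫_ℂ =
      ∫ s, ((((g s).re : ℝ) : ℂ) * x s - Complex.I * ((((g s).im : ℝ) : ℂ) * x s)) ∂ρ := by
    rw [L2.inner_def]
    refine integral_congr_ae ?_
    filter_upwards [BoundedContinuousFunction.coeFn_toLp (p := 2) (μ := ρ) (𝕜 := ℂ) g] with s hs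
    rw [hs, RCLike.inner_apply]
    have : (starRingEnd ℂ) (g s) = (g s).re - Complex.I * (g s).im := by
      apply Complex.ext <;> simp
    rw [this]; ring
  have e2 : ⟪BoundedContinuousFunction.toLp 2 ρ ℂ g, x⟫_ℂ = 0 := by
    rw [e, integral_sub (hbi _ cre hre) ((hbi _ cim him).const_mul _), integral_const_mul,
      hc _ cre hre, hc _ cim him]
    simp
  first | exact e2 | exact inner_eq_zero_symm.1 e2

/-- **The operator `Σ₀* = M̃ M⁻¹` is an asymptotically stable contraction.** In the model
`L²(ρ)` (with `ρ` a finite measure of bounded support on `(0,∞)` satisfying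
`∫ s⁻² dρ ≤ 1`, `M` multiplication by `s`, and `M̃ = (M² − ⟨·,𝟙⟩𝟙)^{1/2}`), there is a
unique bounded operator `T` with `T∘M = M̃`; it is a contraction and it is asymptotically
stable: `Tⁿ x → 0` for every `x ∈ L²(ρ)`. -/
theorem Sigma0_asymptotically_stable
    (ρ : Measure ℝ) [IsFiniteMeasure ρ]
    (hcarr : ρ {s : ℝ | s ≤ 0} = 0)
    (hbddsupp : ∃ b : ℝ, ρ {s : ℝ | b < s} = 0)
    (hnorm : ∫⁻ s, ENNReal.ofReal (s⁻¹ ^ 2) ∂ρ ≤ 1)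
    (one : Lp ℂ 2 ρ)
    (hone : ∀ᵐ s ∂ρ, (one : ℝ → ℂ) s = 1)
    (M Mt : Lp ℂ 2 ρ →L[ℂ] Lp ℂ 2 ρ)
    (hM : ∀ f : Lp ℂ 2 ρ, ∀ᵐ s ∂ρ, (M f : ℝ → ℂ) s = (s : ℂ) * (f : ℝ → ℂ) s)
    (hMt_pos : Mt.IsPositive)
    (hMt_sq : ∀ f, Mt (Mt f) = M (M f) - ⟪one, f⟫_ℂ • one) :
    (∃! T : Lp ℂ 2 ρ →L[ℂ] Lp ℂ 2 ρ, T.comp M = Mt) ∧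
    ∀ T : Lp ℂ 2 ρ →L[ℂ] Lp ℂ 2 ρ, T.comp M = Mt →
      ‖T‖ ≤ 1 ∧
      (∀ x : Lp ℂ 2 ρ, Tendsto (fun n : ℕ => (T ^ n) x) atTop (nhds 0)) := by
  obtain ⟨b, hb⟩ := hbddsupp
  have hpos : ∀ᵐ s ∂ρ, 0 < s := by
    rw [ae_iff]; simpa using hcarr
  have hab : ∀ᵐ s ∂ρ, s ∈ Set.Icc 0 b := by
    have h2 : ∀ᵐ s ∂ρ, s ≤ b := by rw [ae_iff]; simpa using hb
    filter_upwards [hpos, h2] with s h1 h2 using ⟨h1.le, h2⟩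
  have hMsym : ∀ f g : Lp ℂ 2 ρ, ⟪M f, g⟫_ℂ = ⟪f, M g⟫_ℂ := by
    intro f g
    rw [L2.inner_def, L2.inner_def]
    refine integral_congr_ae ?_
    filter_upwards [hM f, hM g] with s h1 h2
    rw [h1, h2, RCLike.inner_apply, RCLike.inner_apply, map_mul, Complex.conj_ofReal]
    ring
  have hMp : M.IsPositive := by
    refine ⟨hMsym, fun f => ?_⟩
    rw [ContinuousLinearMap.reApplyInnerSelf_apply, L2.inner_def, ← integral_re (L2.integrable_inner _ _)]
    refine integral_nonneg_of_ae ?_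
    filter_upwards [hM f, hpos] with s h1 h2
    rw [h1, RCLike.inner_apply, map_mul (starRingEnd ℂ), Complex.conj_ofReal, mul_left_comm, Complex.mul_conj,
      ← Complex.ofReal_mul]
    have := mul_nonneg h2.le (Complex.normSq_nonneg (f s))
    simpa using this
  have hMinj : ∀ f, M f = 0 → f = 0 := by
    intro f hf
    rw [Lp.eq_zero_iff_ae_eq_zero]
    have h0 := (Lp.eq_zero_iff_ae_eq_zero).1 hf
    filter_upwards [hM f, hpos, h0] with s h1 h2 h3
    rw [h1] at h3
    have hs : (s : ℂ) ≠ 0 := by exact_mod_cast h2.ne'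
    simpa [hs] using h3
  have hMd : DenseRange M := by
    apply aux_range
    rw [hMp.isSelfAdjoint.adjoint_eq]
    exact hMinj
  have hle : ∀ f, ‖Mt f‖ ≤ 1 * ‖M f‖ := by
    intro f
    rw [one_mul]
    refine le_of_sq_le_sq ?_ (norm_nonneg _)
    have h1 : ⟪Mt f, Mt f⟫_ℂ = ⟪M f, M f⟫_ℂ - ⟪one, f⟫_ℂ * ⟪f, one⟫_ℂ := by
      have := hMt_pos.isSymmetric f (Mt f)
      simp only [ContinuousLinearMap.coe_coe] at this
      rw [this, hMt_sq, inner_sub_right, inner_smul_right, hMsym]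
    have h2 := congrArg RCLike.re h1
    rw [map_sub, inner_self_eq_norm_sq, inner_self_eq_norm_sq, inner_mul_symm_re_eq_norm] at h2
    linarith [norm_nonneg (⟪one, f⟫_ℂ * ⟪f, one⟫_ℂ)]
  have huniq : ∀ T T' : Lp ℂ 2 ρ →L[ℂ] Lp ℂ 2 ρ, T.comp M = Mt → T'.comp M = Mt → T = T' := by
    intro T T' h h'
    apply ContinuousLinearMap.coeFn_injective
    refine hMd.equalizer T.continuous T'.continuous ?_
    funext u
    have := congrArg (fun A => A u) (h.trans h'.symm)
    exact this
  have hex : (Mt.toLinearMap.extendOfNorm M.toLinearMap).comp M = Mt := by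
    ext1 u
    exact LinearMap.extendOfNorm_eq (f := Mt.toLinearMap) (e := M.toLinearMap) hMd ⟨1, hle⟩ u
  refine ⟨⟨_, hex, fun T' h => huniq _ _ h hex⟩, fun T hT => ?_⟩
  have hT1 : ‖T‖ ≤ 1 := by
    rw [huniq T _ hT hex]
    exact LinearMap.opNorm_extendOfNorm_le (f := Mt.toLinearMap) (e := M.toLinearMap) hMd zero_le_one hle
  refine ⟨hT1, aux_stable_s8 M Mt T hMp hMt_pos hMd hT1 hT ?_⟩
  have h1 : ∀ x, T (M x) = Mt x := fun x => by rw [← hT]; rfl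
  have h2 : ∀ x, M (ContinuousLinearMap.adjoint T x) = Mt x := fun x => by
    have := congrArg ContinuousLinearMap.adjoint hT
    rw [ContinuousLinearMap.adjoint_comp, hMp.isSelfAdjoint.adjoint_eq,
      hMt_pos.isSelfAdjoint.adjoint_eq] at this
    rw [← this]; rfl
  have hMtM : ∀ y, T y = y → Mt y = M y := fun y hy => by
    rw [← h2, aux_fix T hT1 y hy]
  have hinv : ∀ y, T y = y → T (M y) = M y := fun y hy => by
    rw [h1, hMtM y hy]
  have horth : ∀ y, T y = y → ⟪one, y⟫_ℂ = 0 := by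
    intro y hy
    have h3 := hMt_sq y
    rw [hMtM y hy, hMtM _ (hinv y hy), eq_comm, sub_eq_self, smul_eq_zero] at h3
    rcases h3 with h3 | h3
    · exact h3
    · rw [h3, inner_zero_left]
  intro x hx
  have hpoly : ∀ p : Polynomial ℝ, ∃ y : Lp ℂ 2 ρ, T y = y ∧
      ∀ᵐ s ∂ρ, y s = ((p.eval s : ℝ) : ℂ) * x s := by
    intro p
    induction p using Polynomial.induction_on with
    | C a =>
      refine ⟨(a : ℂ) • x, by rw [map_smul, hx], ?_⟩
      filter_upwards [Lp.coeFn_smul (a : ℂ) x] with s hs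
      rw [hs]; simp
    | add p q hp hq =>
      obtain ⟨y, hy, hy'⟩ := hp
      obtain ⟨z, hz, hz'⟩ := hq
      refine ⟨y + z, by rw [map_add, hy, hz], ?_⟩
      filter_upwards [Lp.coeFn_add y z, hy', hz'] with s hs h3 h4
      rw [hs, Pi.add_apply, h3, h4]; simp; ring
    | monomial n a ih =>
      obtain ⟨y, hy, hy'⟩ := ih
      refine ⟨M y, hinv y hy, ?_⟩
      filter_upwards [hM y, hy'] with s hs h3
      rw [hs, h3]; simp; ring
  refine aux_moment ρ b hab x (fun p => ?_) (fun p => ?_)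
  · obtain ⟨y, hy, hy'⟩ := hpoly p
    rw [← horth y hy, L2.inner_def]
    refine integral_congr_ae ?_
    filter_upwards [hy', hone] with s h3 h4
    rw [RCLike.inner_apply, h3, h4]; simp
  · obtain ⟨y, hy, hy'⟩ := hpoly p
    exact ((Lp.memLp y).integrable (by norm_num)).congr hy'
end

section
/- Let ρ, M, M̃ be as in the model context and let Q be the unique bounded operator on L²(ρ) with Q∘M^{1/2} = M̃^{1/2} (positive square roots). Then Q is a strict contraction: ‖Qx‖ < ‖x‖ for every nonzero x ∈ L²(ρ). -/
open MeasureTheory Filter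
open scoped InnerProductSpace ENNReal

theorem abstract_contraction {H : Type*} [NormedAddCommGroup H] [InnerProductSpace ℂ H]
    [CompleteSpace H] (one h : H) (M Mt Ms Mts : H →L[ℂ] H)
    (hMh : M h = one) (hMinj : ∀ x, M x = 0 → x = 0)
    (hcyc : ∀ z, (∀ n : ℕ, ⟪one, (M ^ n) z⟫_ℂ = 0) → z = 0)
    (hMt_pos : Mt.IsPositive)
    (hMt_sq : ∀ f, Mt (Mt f) = M (M f) - ⟪one, f⟫_ℂ • one)
    (hMs_pos : Ms.IsPositive) (hMs_sq : ∀ f, Ms (Ms f) = M f)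
    (hMts_pos : Mts.IsPositive) (hMts_sq : ∀ f, Mts (Mts f) = Mt f)
    (Q : H →L[ℂ] H) (hQ : Q.comp Ms = Mts) :
    ∀ x : H, x ≠ 0 → ‖Q x‖ < ‖x‖ := by
  have sMs : ∀ a b, ⟪Ms a, b⟫_ℂ = ⟪a, Ms b⟫_ℂ := fun a b => hMs_pos.isSymmetric a b
  have sMts : ∀ a b, ⟪Mts a, b⟫_ℂ = ⟪a, Mts b⟫_ℂ := fun a b => hMts_pos.isSymmetric a b
  have sMt : ∀ a b, ⟪Mt a, b⟫_ℂ = ⟪a, Mt b⟫_ℂ := fun a b => hMt_pos.isSymmetric a b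
  have sM : ∀ a b, ⟪M a, b⟫_ℂ = ⟪a, M b⟫_ℂ := fun a b => by
    rw [← hMs_sq, ← hMs_sq, sMs, sMs]
  have hQ' : ∀ v, Q (Ms v) = Mts v := fun v => by rw [← hQ]; rfl
  have hcomm : ∀ v, M (Ms v) = Ms (M v) := fun v => by rw [← hMs_sq (Ms v), hMs_sq v]
  have hMsinj : ∀ x, Ms x = 0 → x = 0 := fun x hx => hMinj x (by rw [← hMs_sq, hx, map_zero])
  have hdense : DenseRange Ms := by
    have h1 : (Ms.range)ᗮ = ⊥ := by
      rw [Submodule.eq_bot_iff]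
      intro x hx
      apply hMsinj
      rw [Submodule.mem_orthogonal] at hx
      have := hx (Ms (Ms x)) ⟨_, rfl⟩
      rw [sMs, inner_self_eq_zero] at this
      exact this
    have h2 := (Submodule.topologicalClosure_eq_top_iff).2 h1
    have h3 := Submodule.dense_iff_topologicalClosure_eq_top.2 h2
    intro x
    exact h3 x
  have hadj : ∀ v, Ms (Q.adjoint v) = Mts v := by
    intro v
    apply ext_inner_left ℂ
    intro w
    rw [← sMs, ContinuousLinearMap.adjoint_inner_right, hQ', sMts]
  -- operator monotonicity
  have hle : Mt ≤ M := by
    have hMpos : (0 : H →L[ℂ] H) ≤ M := by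
      rw [ContinuousLinearMap.nonneg_iff_isPositive, ContinuousLinearMap.isPositive_def]
      refine ⟨fun a b => sM a b, fun x => ?_⟩
      rw [ContinuousLinearMap.reApplyInnerSelf_apply, ← hMs_sq, sMs]
      exact inner_self_nonneg
    have hMtpos : (0 : H →L[ℂ] H) ≤ Mt := by
      rwa [ContinuousLinearMap.nonneg_iff_isPositive]
    have hsq : Mt * Mt ≤ M * M := by
      rw [ContinuousLinearMap.le_def, ContinuousLinearMap.isPositive_def]
      refine ⟨fun a b => ?_, fun x => ?_⟩
      · simp [inner_sub_left, inner_sub_right, sM, sMt]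
      · rw [ContinuousLinearMap.reApplyInnerSelf_apply]
        simp only [sub_apply, mul_apply_eq_comp, hMt_sq,
          sub_sub_cancel, inner_smul_left]
        rw [inner_conj_symm, mul_comm, inner_mul_symm_re_eq_norm]
        positivity
    have := CFC.sqrt_le_sqrt _ _ hsq
    rwa [CFC.sqrt_mul_self Mt hMtpos, CFC.sqrt_mul_self M hMpos] at this
  have hcontr : ∀ x, ‖Q x‖ ≤ ‖x‖ := by
    intro x
    refine hdense.induction_on (p := fun x => ‖Q x‖ ≤ ‖x‖) x
      (isClosed_le (by fun_prop) (by fun_prop)) ?_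
    intro v
    rw [hQ']
    have h1 := (ContinuousLinearMap.isPositive_def.1 (ContinuousLinearMap.le_def _ _ |>.1 hle)).2 v
    rw [ContinuousLinearMap.reApplyInnerSelf_apply] at h1
    simp only [sub_apply, inner_sub_left, ← hMs_sq, ← hMts_sq, sMs, sMts] at h1
    rw [← sMs, ← sMts, map_sub, inner_self_eq_norm_sq, inner_self_eq_norm_sq] at h1
    exact abs_le_of_sq_le_sq' (by linarith) (norm_nonneg _) |>.2
  set g := Ms h with hg
  have hMsg : Ms g = one := by rw [hg, hMs_sq, hMh]
  have key : ∀ w, M w = Q.adjoint (Mt (Q w)) + ⟪g, w⟫_ℂ • g := by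
    intro w
    refine hdense.induction_on (p := fun w => M w = Q.adjoint (Mt (Q w)) + ⟪g, w⟫_ℂ • g) w
      (isClosed_eq (by fun_prop) (by fun_prop)) ?_
    intro v
    rw [← sub_eq_zero]
    apply hMsinj
    rw [map_sub, map_add, hadj, map_smul, hQ', ← sMs, hMsg, hcomm, hMs_sq, ← hMts_sq (Mts v),
      hMts_sq v, hMts_sq, hMt_sq]
    abel
  have hK : ∀ x, Q.adjoint (Q x) = x → ⟪g, x⟫_ℂ = 0 ∧ Q.adjoint (Q (M x)) = M x := by
    intro x hx
    have e1 : Mts (Q x) = Ms x := by rw [← hadj, hx]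
    have e2 : ⟪g, x⟫_ℂ = 0 := by
      have h1 : ⟪x, M x⟫_ℂ = ⟪x, Q.adjoint (Mt (Q x)) + ⟪g, x⟫_ℂ • g⟫_ℂ := by rw [← key]
      rw [inner_add_right, ContinuousLinearMap.adjoint_inner_right, ← hMts_sq, ← sMts, e1,
        ← hMs_sq, ← sMs, inner_smul_right, left_eq_add, mul_eq_zero] at h1
      rcases h1 with h1 | h1
      · exact h1
      · rw [← inner_conj_symm, h1, map_zero]
    refine ⟨e2, ?_⟩
    conv_rhs => rw [key, e2, zero_smul, add_zero, ← hMts_sq, e1, ← hQ', hMs_sq]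
  intro x hx0
  refine lt_of_le_of_ne (hcontr x) fun heq => hx0 ?_
  have hx : Q.adjoint (Q x) = x := by
    have hn : ‖Q.adjoint (Q x)‖ ≤ ‖Q x‖ := by
      have hQn : ‖Q‖ ≤ 1 := Q.opNorm_le_bound zero_le_one (by simpa using hcontr)
      calc _ ≤ ‖Q.adjoint‖ * ‖Q x‖ := Q.adjoint.le_opNorm _
        _ ≤ 1 * ‖Q x‖ := by
          gcongr
          rwa [LinearIsometryEquiv.norm_map]
        _ = _ := one_mul _
    have h1 := @norm_sub_sq ℂ H _ _ _ (Q.adjoint (Q x)) x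
    rw [ContinuousLinearMap.adjoint_inner_left, inner_self_eq_norm_sq] at h1
    have h2 : ‖Q.adjoint (Q x) - x‖ ^ 2 ≤ 0 := by
      rw [h1, ← heq]
      nlinarith [norm_nonneg (Q.adjoint (Q x))]
    have h3 : ‖Q.adjoint (Q x) - x‖ = 0 := by
      have := sq_nonneg ‖Q.adjoint (Q x) - x‖
      exact pow_eq_zero_iff (two_ne_zero) |>.1 (le_antisymm h2 this)
    exact sub_eq_zero.1 (norm_eq_zero.1 h3)
  have hpow : ∀ n : ℕ, Q.adjoint (Q ((M ^ n) x)) = (M ^ n) x := by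
    intro n
    induction n with
    | zero => simpa using hx
    | succ n ih =>
      rw [pow_succ', mul_apply_eq_comp]
      exact (hK _ ih).2
  have hcommn : ∀ (n : ℕ) v, (M ^ n) (Ms v) = Ms ((M ^ n) v) := by
    intro n v
    induction n with
    | zero => simp
    | succ n ih => rw [pow_succ', mul_apply_eq_comp, ih, hcomm]; rfl
  apply hMsinj
  apply hcyc
  intro n
  rw [hcommn, ← hMh, ← hMs_sq, ← hg, sMs, hMs_sq]
  have := (hK _ (hpow (n+1))).1
  rwa [pow_succ', mul_apply_eq_comp] at this

theorem cyc_aux (ρ : Measure ℝ) [IsFiniteMeasure ρ] (a b : ℝ)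
    (hab : ∀ᵐ s ∂ρ, s ∈ Set.Icc a b) (f : ℝ → ℂ) (hf : Integrable f ρ)
    (hz : ∀ n : ℕ, ∫ s, (s : ℂ) ^ n * f s ∂ρ = 0) : ∀ᵐ s ∂ρ, f s = 0 := by
  have hb : ∀ g : ℝ → ℝ, Continuous g → Integrable (fun s => g s • f s) ρ := by
    intro g hg
    obtain ⟨C, hC⟩ := isCompact_Icc.exists_bound_of_continuousOn (s := Set.Icc a b) hg.continuousOn
    exact hf.bdd_smul C hg.aestronglyMeasurable (hab.mono fun s hs => hC s hs)
  have hp : ∀ p : Polynomial ℝ, ∫ s, p.eval s • f s ∂ρ = 0 := by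
    intro p
    induction p using Polynomial.induction_on' with
    | add p q hp hq =>
      simp only [Polynomial.eval_add, add_smul]
      rw [integral_add (hb _ p.continuous) (hb _ q.continuous), hp, hq, add_zero]
    | monomial n c =>
      simp only [Polynomial.eval_monomial, mul_smul]
      rw [integral_smul]
      have := hz n
      simp only [Complex.real_smul, Complex.ofReal_pow]
      rw [this, mul_zero]
  refine ae_eq_zero_of_integral_contDiff_smul_eq_zero hf.locallyIntegrable fun g hg _ => ?_
  have hgc := hg.continuous
  rw [← norm_eq_zero]
  refine le_antisymm (le_of_forall_pos_le_add fun ε hε => ?_) (norm_nonneg _)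
  set I := ∫ s, ‖f s‖ ∂ρ with hI
  have hI0 : 0 ≤ I := integral_nonneg fun _ => norm_nonneg _
  obtain ⟨p, hpp⟩ := exists_polynomial_near_of_continuousOn a b g hgc.continuousOn (ε / (I + 1))
    (by positivity)
  have e : ∫ s, g s • f s ∂ρ = ∫ s, (g s - p.eval s) • f s ∂ρ := by
    simp only [sub_smul]
    rw [integral_sub (hb _ hgc) (hb _ p.continuous), hp, sub_zero]
  rw [e, zero_add]
  calc _ ≤ ∫ s, (ε / (I + 1)) * ‖f s‖ ∂ρ := by
        apply norm_integral_le_of_norm_le (hf.norm.const_mul _)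
        filter_upwards [hab] with s hs
        rw [norm_smul, Real.norm_eq_abs, abs_sub_comm]
        gcongr
        exact (hpp s hs).le
    _ = ε * (I / (I + 1)) := by rw [integral_const_mul]; ring
    _ ≤ ε * 1 := by
        gcongr
        rw [div_le_one (by positivity)]; linarith
    _ = ε := mul_one _

/-- **`Q = M̃^{1/2} M^{-1/2}` is a strict contraction.** In the model `L²(ρ)` (with `ρ` a
finite measure of bounded support on `(0,∞)` satisfying `∫ s⁻² dρ ≤ 1`, `M` multiplication
by `s`, and `M̃ = (M² − ⟨·,𝟙⟩𝟙)^{1/2}`), the unique bounded operator `Q` with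
`Q∘M^{1/2} = M̃^{1/2}` satisfies `‖Qx‖ < ‖x‖` for every nonzero `x`. -/
theorem Q_strict_contraction
    (ρ : Measure ℝ) [IsFiniteMeasure ρ]
    (hcarr : ρ {s : ℝ | s ≤ 0} = 0)
    (hbddsupp : ∃ b : ℝ, ρ {s : ℝ | b < s} = 0)
    (hnorm : ∫⁻ s, ENNReal.ofReal (s⁻¹ ^ 2) ∂ρ ≤ 1)
    (one : Lp ℂ 2 ρ)
    (hone : ∀ᵐ s ∂ρ, (one : ℝ → ℂ) s = 1)
    (M Mt Ms Mts : Lp ℂ 2 ρ →L[ℂ] Lp ℂ 2 ρ)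
    (hM : ∀ f : Lp ℂ 2 ρ, ∀ᵐ s ∂ρ, (M f : ℝ → ℂ) s = (s : ℂ) * (f : ℝ → ℂ) s)
    (hMt_pos : Mt.IsPositive)
    (hMt_sq : ∀ f, Mt (Mt f) = M (M f) - ⟪one, f⟫_ℂ • one)
    (hMs_pos : Ms.IsPositive) (hMs_sq : ∀ f, Ms (Ms f) = M f)
    (hMts_pos : Mts.IsPositive) (hMts_sq : ∀ f, Mts (Mts f) = Mt f)
    (Q : Lp ℂ 2 ρ →L[ℂ] Lp ℂ 2 ρ) (hQ : Q.comp Ms = Mts) :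
    ∀ x : Lp ℂ 2 ρ, x ≠ 0 → ‖Q x‖ < ‖x‖ := by
  obtain ⟨b, hb⟩ := hbddsupp
  have hpos : ∀ᵐ s ∂ρ, 0 < s := by
    rw [ae_iff]; simpa using hcarr
  have hbb : ∀ᵐ s ∂ρ, s ≤ b := by
    rw [ae_iff]; simpa using hb
  have hmeas : AEStronglyMeasurable (fun s : ℝ => ((s⁻¹ : ℝ) : ℂ)) ρ :=
    (Complex.measurable_ofReal.comp measurable_inv).aestronglyMeasurable
  have hmem : MemLp (fun s : ℝ => ((s⁻¹ : ℝ) : ℂ)) 2 ρ := by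
    rw [memLp_two_iff_integrable_sq_norm hmeas]
    refine ⟨(hmeas.norm.pow 2), ?_⟩
    rw [hasFiniteIntegral_iff_ofReal (ae_of_all _ fun s => by positivity)]
    simp only [Complex.norm_real, Real.norm_eq_abs, sq_abs]
    exact hnorm.trans_lt ENNReal.one_lt_top
  refine abstract_contraction one (hmem.toLp _) M Mt Ms Mts ?_ ?_ ?_ hMt_pos hMt_sq hMs_pos hMs_sq
    hMts_pos hMts_sq Q hQ
  · apply Lp.ext
    filter_upwards [hM (hmem.toLp _), hmem.coeFn_toLp, hone, hpos] with s h1 h2 h3 h4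
    rw [h1, h2, h3, ← Complex.ofReal_mul, mul_inv_cancel₀ h4.ne', Complex.ofReal_one]
  · intro x hx
    have h0 := Lp.coeFn_zero ℂ 2 ρ
    apply Lp.ext
    have h1 := hM x
    rw [hx] at h1
    filter_upwards [h1, h0, hpos] with s h1 h2 h3
    rw [h2] at h1 ⊢
    have h4 : (s : ℂ) ≠ 0 := by exact_mod_cast h3.ne'
    simpa [h4] using h1.symm
  · intro z hz
    have hpw : ∀ n : ℕ, ∀ᵐ s ∂ρ, ((M ^ n) z : ℝ → ℂ) s = (s : ℂ) ^ n * (z : ℝ → ℂ) s := by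
      intro n
      induction n with
      | zero => simp
      | succ n ih =>
        rw [pow_succ', mul_apply_eq_comp]
        filter_upwards [ih, hM ((M ^ n) z)] with s h1 h2
        rw [h2, h1]; ring
    have := cyc_aux ρ 0 b (by filter_upwards [hpos, hbb] with s h1 h2 using ⟨h1.le, h2⟩) z
      ((Lp.memLp z).integrable (by norm_num)) (fun n => by
        rw [← hz n, L2.inner_def]
        apply integral_congr_ae
        filter_upwards [hpw n, hone] with s h1 h2
        rw [h1, h2]; simp)
    apply Lp.ext
    filter_upwards [this, Lp.coeFn_zero ℂ 2 ρ] with s h1 h2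
    rw [h1, h2]; rfl
end

section
/- Let X be a complex Hilbert space, q ∈ X, and let T be a bounded linear operator on X satisfying T*∘T = I − ⟨·, q⟩q (in particular ‖T‖ ≤ 1). Assume T is asymptotically stable: Tⁿ f → 0 for every f ∈ X. Then the map U : X → ℓ²(ℕ, ℂ) defined by (Uf)ₖ := ⟨Tᵏ f, q⟩ for k ≥ 0 is a well-defined linear isometry (in particular Σ_{k≥0} |⟨Tᵏ f, q⟩|² = ‖f‖² for every f ∈ X), and it intertwines T with the backward shift: U∘T = S*∘U, where (S*y)ₙ = yₙ₊₁ on ℓ²(ℕ, ℂ). -/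
open Filter
open scoped InnerProductSpace

/-- **The spectral isometry into `ℓ²`.** Let `T` be a bounded operator on a complex Hilbert
space with `T*T = I − ⟨·,q⟩q`, and assume `T` is asymptotically stable. Then
`U f := (⟨Tᵏf, q⟩)_{k≥0}` is a well-defined linear isometry from `X` into `ℓ²(ℕ, ℂ)`
(in particular `Σₖ |⟨Tᵏf, q⟩|² = ‖f‖²`), and `U` intertwines `T` with the backward
shift: `(U(Tf))ₙ = (Uf)ₙ₊₁`. -/
theorem isometry_into_l2_of_asymptotically_stable
    {X : Type*} [NormedAddCommGroup X] [InnerProductSpace ℂ X] [CompleteSpace X]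
    (q : X) (T : X →L[ℂ] X)
    (hT : ∀ f : X, (ContinuousLinearMap.adjoint T) (T f) = f - ⟪q, f⟫_ℂ • q)
    (hstab : ∀ f : X, Tendsto (fun n : ℕ => (T ^ n) f) atTop (nhds 0)) :
    ∃ U : X →ₗᵢ[ℂ] lp (fun _ : ℕ => ℂ) 2,
      (∀ (f : X) (k : ℕ), U f k = ⟪q, (T ^ k) f⟫_ℂ) ∧
      (∀ f : X, HasSum (fun k : ℕ => ‖⟪q, (T ^ k) f⟫_ℂ‖ ^ 2) (‖f‖ ^ 2)) ∧
      (∀ (f : X) (n : ℕ), U (T f) n = U f (n + 1)) := by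
  have key : ∀ f : X, ‖⟪q, f⟫_ℂ‖ ^ 2 = ‖f‖ ^ 2 - ‖T f‖ ^ 2 := by
    intro f
    have h1 : ⟪(ContinuousLinearMap.adjoint T) (T f), f⟫_ℂ = ⟪T f, T f⟫_ℂ :=
      ContinuousLinearMap.adjoint_inner_left T f (T f)
    rw [hT, inner_sub_left, inner_smul_left, inner_self_eq_norm_sq_to_K,
      inner_self_eq_norm_sq_to_K, RCLike.conj_mul] at h1
    have h2 : ‖f‖ ^ 2 - ‖⟪q, f⟫_ℂ‖ ^ 2 = ‖T f‖ ^ 2 := by exact_mod_cast h1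
    linarith
  have hsum : ∀ f : X, HasSum (fun k : ℕ => ‖⟪q, (T ^ k) f⟫_ℂ‖ ^ 2) (‖f‖ ^ 2) := by
    intro f
    rw [hasSum_iff_tendsto_nat_of_nonneg (fun k => by positivity)]
    have h : ∀ n : ℕ, ∑ k ∈ Finset.range n, ‖⟪q, (T ^ k) f⟫_ℂ‖ ^ 2
        = ‖f‖ ^ 2 - ‖(T ^ n) f‖ ^ 2 := by
      intro n
      induction n with
      | zero => simp
      | succ n ih =>
        rw [Finset.sum_range_succ, ih, key, pow_succ' T n, ContinuousLinearMap.mul_apply]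
        ring
    simp only [h]
    have := ((hstab f).norm.pow 2).const_sub (‖f‖ ^ 2)
    simpa using this
  have hmem : ∀ f : X, Memℓp (fun k : ℕ => ⟪q, (T ^ k) f⟫_ℂ) 2 := by
    intro f
    apply memℓp_gen
    simpa using (hsum f).summable
  let L : X →ₗ[ℂ] lp (fun _ : ℕ => ℂ) 2 :=
    { toFun := fun f => ⟨fun k : ℕ => ⟪q, (T ^ k) f⟫_ℂ, hmem f⟩
      map_add' := by
        intro f g
        ext k
        change ⟪q, (T ^ k) (f + g)⟫_ℂ = ⟪q, (T ^ k) f⟫_ℂ + ⟪q, (T ^ k) g⟫_ℂ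
        rw [map_add, inner_add_right]
      map_smul' := by
        intro c f
        ext k
        simp [inner_smul_right] }
  have hL : ∀ (f : X) (k : ℕ), L f k = ⟪q, (T ^ k) f⟫_ℂ := fun _ _ => rfl
  refine ⟨⟨L, ?_⟩, fun f k => rfl, hsum, ?_⟩
  · intro f
    have h1 := lp.norm_rpow_eq_tsum (p := 2) (by norm_num) (L f)
    simp only [hL, ENNReal.toReal_ofNat, Real.rpow_ofNat] at h1
    rw [(hsum f).tsum_eq] at h1
    exact (sq_eq_sq₀ (norm_nonneg _) (norm_nonneg _)).1 h1
  · intro f n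
    change ⟪q, (T ^ n) (T f)⟫_ℂ = ⟪q, (T ^ (n + 1)) f⟫_ℂ
    rw [pow_succ, ContinuousLinearMap.mul_apply]
end

section
/- Let X be a complex Hilbert space, q ∈ X, and let T be a bounded linear operator on X with T*∘T = I − ⟨·, q⟩q and with T asymptotically stable, and let U : X → ℓ²(ℕ, ℂ), (Uf)ₖ = ⟨Tᵏ f, q⟩, be the associated isometry (so U∘T = S*∘U). Suppose in addition that H is a bounded conjugate-linear map on X satisfying the symmetry ⟨Hf, g⟩ = ⟨Hg, f⟩ and the commutation relation T∘H = H∘T*. Let U* : ℓ²(ℕ, ℂ) → X denote the adjoint of U (determined by ⟨Ux, y⟩ = ⟨x, U*y⟩). Then the bounded conjugate-linear map A := U∘H∘U* on ℓ²(ℕ, ℂ) satisfies A∘S = S*∘A; that is, A is a bounded anti-linear Hankel operator on ℓ²(ℕ, ℂ). -/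
open Filter
open scoped InnerProductSpace ComplexConjugate

/-- **Transplanting a symmetric anti-linear operator to a Hankel operator on `ℓ²`.**
With `T`, `q`, and the isometry `U` (given by `(Uf)ₖ = ⟨Tᵏf, q⟩`) as in the construction,
suppose `H` is a bounded symmetric conjugate-linear map on `X` with `T∘H = H∘T*`. Then
`A := U∘H∘U*` is a bounded conjugate-linear map on `ℓ²(ℕ, ℂ)` satisfying `A∘S = S*∘A`,
i.e. `A` is an anti-linear Hankel operator. -/
theorem transplanted_operator_is_hankel
    {X : Type*} [NormedAddCommGroup X] [InnerProductSpace ℂ X] [CompleteSpace X]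
    (q : X) (T : X →L[ℂ] X)
    (hT : ∀ f : X, (ContinuousLinearMap.adjoint T) (T f) = f - ⟪q, f⟫_ℂ • q)
    (hstab : ∀ f : X, Tendsto (fun n : ℕ => (T ^ n) f) atTop (nhds 0))
    (H : X → X)
    (hadd : ∀ f g : X, H (f + g) = H f + H g)
    (hsmul : ∀ (c : ℂ) (f : X), H (c • f) = conj c • H f)
    (hbdd : ∃ Cb : ℝ, ∀ f : X, ‖H f‖ ≤ Cb * ‖f‖)
    (hsym : ∀ f g : X, ⟪H f, g⟫_ℂ = ⟪H g, f⟫_ℂ)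
    (hTH : ∀ f : X, T (H f) = H ((ContinuousLinearMap.adjoint T) f))
    (U : X →ₗᵢ[ℂ] lp (fun _ : ℕ => ℂ) 2)
    (hU : ∀ (f : X) (k : ℕ), U f k = ⟪q, (T ^ k) f⟫_ℂ)
    (S Sstar : lp (fun _ : ℕ => ℂ) 2 →L[ℂ] lp (fun _ : ℕ => ℂ) 2)
    (hS0 : ∀ x : lp (fun _ : ℕ => ℂ) 2, S x 0 = 0)
    (hSsucc : ∀ (x : lp (fun _ : ℕ => ℂ) 2) (n : ℕ), S x (n + 1) = x n)
    (hSstar : ∀ (x : lp (fun _ : ℕ => ℂ) 2) (n : ℕ), Sstar x n = x (n + 1))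
    (A : lp (fun _ : ℕ => ℂ) 2 → lp (fun _ : ℕ => ℂ) 2)
    (hA : ∀ y : lp (fun _ : ℕ => ℂ) 2,
      A y = U (H ((ContinuousLinearMap.adjoint U.toContinuousLinearMap) y))) :
    (∀ y z : lp (fun _ : ℕ => ℂ) 2, A (y + z) = A y + A z) ∧
    (∀ (c : ℂ) (y : lp (fun _ : ℕ => ℂ) 2), A (c • y) = conj c • A y) ∧
    (∃ Cb : ℝ, ∀ y : lp (fun _ : ℕ => ℂ) 2, ‖A y‖ ≤ Cb * ‖y‖) ∧
    (∀ y : lp (fun _ : ℕ => ℂ) 2, A (S y) = Sstar (A y)) := by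
  have hUT : ∀ f : X, U (T f) = Sstar (U f) := by
    intro f
    ext k
    rw [hSstar, hU, hU, pow_succ]
    rfl
  have hUS : ∀ y : lp (fun _ : ℕ => ℂ) 2,
      (ContinuousLinearMap.adjoint U.toContinuousLinearMap) (S y) =
      (ContinuousLinearMap.adjoint T)
        ((ContinuousLinearMap.adjoint U.toContinuousLinearMap) y) := by
    intro y
    refine ext_inner_left ℂ fun f => ?_
    rw [ContinuousLinearMap.adjoint_inner_right, ContinuousLinearMap.adjoint_inner_right,
      ContinuousLinearMap.adjoint_inner_right]
    change ⟪U f, S y⟫_ℂ = ⟪U (T f), y⟫_ℂ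
    rw [hUT, lp.inner_eq_tsum, lp.inner_eq_tsum,
      (lp.summable_inner (𝕜 := ℂ) (U f) (S y)).tsum_eq_zero_add, hS0, inner_zero_right, zero_add]
    refine tsum_congr fun n => ?_
    rw [hSsucc, hSstar]
  refine ⟨?_, ?_, ?_, ?_⟩
  · intro y z
    rw [hA, hA, hA, map_add, hadd, map_add]
  · intro c y
    rw [hA, hA, map_smul, hsmul, map_smul]
  · obtain ⟨Cb, hCb⟩ := hbdd
    refine ⟨|Cb| * ‖ContinuousLinearMap.adjoint U.toContinuousLinearMap‖, fun y => ?_⟩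
    rw [hA, U.norm_map, mul_assoc]
    refine (hCb _).trans ?_
    refine (mul_le_mul_of_nonneg_right (le_abs_self Cb) (norm_nonneg _)).trans ?_
    exact mul_le_mul_of_nonneg_left (ContinuousLinearMap.le_opNorm _ _) (abs_nonneg _)
  · intro y
    rw [hA, hA, hUS, ← hTH, hUT]
end

section
/- Let ν be a finite positive regular Borel measure on the unit circle 𝕋 = {z ∈ ℂ : |z| = 1} that is singular with respect to the Haar (arc-length/Lebesgue) measure on 𝕋. Then there exist a constant c > 0 and a sequence of polynomials φₙ ∈ ℂ[X] (analytic polynomials in z) such that: (1) sup_{z∈𝕋} |φₙ(z)| ≤ 1 for all n; (2) φₙ(z) → 0 as n → ∞ for Haar-almost every z ∈ 𝕋; (3) liminf_{n→∞} |φₙ(z)| ≥ c for ν-almost every z ∈ 𝕋. -/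
open MeasureTheory Filter
open scoped Real

lemma aux_re (g : C(AddCircle (2 * π), ℂ))
    (hg : g ∈ Submodule.span ℂ (Set.range (fourier (T := 2 * π)))) :
    ∀ c : ℂ, ∃ q : Polynomial ℂ, ∀ t : ℝ,
      (c * g (t : AddCircle (2 * π))).re = (q.eval (Complex.exp (t * Complex.I))).re := by
  induction hg using Submodule.span_induction with
  | mem x hx =>
    obtain ⟨n, rfl⟩ := hx
    intro c
    have key : ∀ t : ℝ, fourier n (t : AddCircle (2 * π)) = Complex.exp (t * Complex.I) ^ n := by
      intro t
      rw [fourier_coe_apply, ← Complex.exp_int_mul]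
      congr 1
      have : (π : ℂ) ≠ 0 := by exact_mod_cast Real.pi_ne_zero
      push_cast
      field_simp
    rcases Int.eq_nat_or_neg n with ⟨k, rfl | rfl⟩
    · refine ⟨Polynomial.C c * Polynomial.X ^ k, fun t => ?_⟩
      rw [key]
      simp
    · refine ⟨Polynomial.C (star c) * Polynomial.X ^ k, fun t => ?_⟩
      rw [key, ← Complex.conj_re]
      congr 1
      simp only [zpow_neg, zpow_natCast, map_mul, map_inv₀, map_pow, ← Complex.exp_conj,
        Complex.conj_I, Complex.conj_ofReal, Polynomial.eval_mul, Polynomial.eval_C,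
        Polynomial.eval_pow, Polynomial.eval_X, mul_neg, Complex.exp_neg, inv_pow, inv_inv]
      rfl
  | zero => exact fun c => ⟨0, by simp⟩
  | add x y _ _ hx hy =>
    intro c
    obtain ⟨p, hp⟩ := hx c
    obtain ⟨q, hq⟩ := hy c
    refine ⟨p + q, fun t => ?_⟩
    rw [Polynomial.eval_add, Complex.add_re, ← hp, ← hq, ContinuousMap.add_apply, mul_add,
      Complex.add_re]
  | smul a x _ hx =>
    intro c
    obtain ⟨p, hp⟩ := hx (c * a)
    refine ⟨p, fun t => ?_⟩
    rw [← hp, ContinuousMap.smul_apply, smul_eq_mul, mul_assoc]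

lemma circle_param (z : ℂ) (hz : ‖z‖ = 1) : ∃ t : ℝ, z = Complex.exp (t * Complex.I) := by
  refine ⟨z.arg, ?_⟩
  have := Complex.norm_mul_exp_arg_mul_I z
  rw [hz] at this
  simpa using this.symm

lemma aux_approx (u : ℂ → ℝ) (hu : Continuous u) (ε : ℝ) (hε : 0 < ε) :
    ∃ q : Polynomial ℂ, ∀ z : ℂ, ‖z‖ = 1 → |(q.eval z).re - u z| < ε := by
  haveI : Fact (0 < 2 * π) := ⟨Real.two_pi_pos⟩
  let F : C(AddCircle (2 * π), ℂ) :=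
    ⟨fun x => ((u (AddCircle.toCircle x : ℂ) : ℝ) : ℂ), by
      have := AddCircle.continuous_toCircle (T := 2 * π)
      fun_prop⟩
  have hF : F ∈ (Submodule.span ℂ (Set.range (fourier (T := 2 * π)))).topologicalClosure := by
    rw [span_fourier_closure_eq_top]; trivial
  obtain ⟨g, hg, hd⟩ := Metric.mem_closure_iff.1 hF ε hε
  obtain ⟨q, hq⟩ := aux_re g hg 1
  refine ⟨q, fun z hz => ?_⟩
  obtain ⟨t, rfl⟩ := circle_param z hz
  rw [← hq t, one_mul]
  have h1 : F (t : AddCircle (2 * π)) = ((u (Complex.exp (t * Complex.I)) : ℝ) : ℂ) := by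
    simp [F, AddCircle.toCircle_apply_mk, Circle.coe_exp]
  have h2 := (ContinuousMap.dist_apply_le_dist (f := F) (g := g) (t : AddCircle (2 * π))).trans_lt hd
  rw [dist_comm, dist_eq_norm, h1] at h2
  refine lt_of_le_of_lt ?_ h2
  have := Complex.abs_re_le_norm (g (t : AddCircle (2 * π)) - ((u (Complex.exp (t * Complex.I)) : ℝ) : ℂ))
  simpa using this

lemma aux_exp (q : Polynomial ℂ) (δ : ℝ) (hδ : 0 < δ) :
    ∃ P : Polynomial ℂ, ∀ z : ℂ, ‖z‖ = 1 → ‖P.eval z - Complex.exp (q.eval z)‖ ≤ δ := by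
  obtain ⟨R, hR⟩ := (isCompact_sphere (0 : ℂ) 1).exists_bound_of_continuousOn
    (f := fun z => q.eval z) q.continuous.continuousOn
  have h1 : ∀ᶠ n : ℕ in atTop, R ^ n / (n.factorial : ℝ) < δ / 2 :=
    (FloorSemiring.tendsto_pow_div_factorial_atTop R).eventually (gt_mem_nhds (by positivity))
  obtain ⟨n, hn1, hn2⟩ := (h1.and (eventually_ge_atTop (Nat.ceil (2 * R)))).exists
  have hn3 : 2 * R ≤ n := (Nat.le_ceil _).trans (by exact_mod_cast hn2)
  refine ⟨∑ m ∈ Finset.range n, Polynomial.C ((m.factorial : ℂ)⁻¹) * q ^ m, fun z hz => ?_⟩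
  have hz' := hR z (by simpa using hz)
  have h := Complex.exp_bound' (x := q.eval z) (n := n) (by
    rw [div_le_iff₀ (by positivity)]
    push_cast
    linarith)
  rw [norm_sub_rev]
  have e : (∑ m ∈ Finset.range n, Polynomial.C ((m.factorial : ℂ)⁻¹) * q ^ m).eval z
      = ∑ m ∈ Finset.range n, (q.eval z) ^ m / (m.factorial : ℂ) := by
    rw [Polynomial.eval_finset_sum]
    refine Finset.sum_congr rfl fun m _ => ?_
    simp [div_eq_inv_mul]
  rw [e]
  refine h.trans ?_
  have : ‖q.eval z‖ ^ n / (n.factorial : ℝ) ≤ R ^ n / (n.factorial : ℝ) := by gcongr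
  linarith

lemma two_exp_le (a b : ℝ) (h : a + 1 ≤ b) : 2 * Real.exp a ≤ Real.exp b := by
  have h1 : Real.exp (a + 1) ≤ Real.exp b := Real.exp_le_exp.2 h
  rw [Real.exp_add] at h1
  have h2 := Real.add_one_le_exp (1 : ℝ)
  nlinarith [Real.exp_pos a]

lemma aux_poly (K U : Set ℂ) (hK : IsCompact K) (hU : IsOpen U) (hKU : K ⊆ U) (n : ℕ) :
    ∃ φ : Polynomial ℂ, (∀ z, ‖z‖ = 1 → ‖φ.eval z‖ ≤ 1) ∧
      (∀ z, ‖z‖ = 1 → z ∈ K → Real.exp (-4) ≤ ‖φ.eval z‖) ∧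
      (∀ z, ‖z‖ = 1 → z ∉ U → ‖φ.eval z‖ ≤ Real.exp (-(n : ℝ))) := by
  obtain ⟨u, hu0, hu1, hu⟩ := exists_continuous_zero_one_of_isClosed (s := Uᶜ) (t := K)
    hU.isClosed_compl hK.isClosed (by
      rw [Set.disjoint_left]; intro x hx hx'; exact hx (hKU hx'))
  set M : ℝ := n + 1 with hM
  have hMpos : 0 < M := by positivity
  obtain ⟨q, hq⟩ := aux_approx u u.continuous (1 / M) (by positivity)
  obtain ⟨P, hP⟩ := aux_exp (Polynomial.C (M : ℂ) * (q - 1) - Polynomial.C 2)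
    (Real.exp (-M - 4)) (Real.exp_pos _)
  have key : ∀ z : ℂ, ‖z‖ = 1 → ∃ r : ℝ, |r - u z| < 1 / M ∧
      ‖P.eval z‖ ≤ Real.exp (M * (r - 1) - 2) + Real.exp (-M - 4) ∧
      Real.exp (M * (r - 1) - 2) ≤ ‖P.eval z‖ + Real.exp (-M - 4) := by
    intro z hz
    refine ⟨(q.eval z).re, hq z hz, ?_⟩
    have h := hP z hz
    have e : ‖Complex.exp ((Polynomial.C (M : ℂ) * (q - 1) - Polynomial.C 2).eval z)‖
        = Real.exp (M * ((q.eval z).re - 1) - 2) := by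
      rw [Complex.norm_exp]
      congr 1
      simp
    rw [← e]
    have a1 := norm_sub_norm_le (P.eval z)
      (Complex.exp ((Polynomial.C (M : ℂ) * (q - 1) - Polynomial.C 2).eval z))
    have a2 := norm_sub_norm_le 
      (Complex.exp ((Polynomial.C (M : ℂ) * (q - 1) - Polynomial.C 2).eval z)) (P.eval z)
    rw [norm_sub_rev] at a2
    constructor <;> linarith
  have scale : ∀ r s : ℝ, |r - s| < 1 / M → M * r < M * s + 1 ∧ M * s < M * r + 1 := by
    intro r s h
    rw [abs_lt, lt_div_iff₀ hMpos, ← neg_div, div_lt_iff₀ hMpos] at h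
    constructor <;> nlinarith [h.1, h.2]
  have hn : (0 : ℝ) ≤ n := Nat.cast_nonneg n
  refine ⟨P, fun z hz => ?_, fun z hz hzK => ?_, fun z hz hzU => ?_⟩
  · obtain ⟨r, hr, h1, h2⟩ := key z hz
    obtain ⟨s1, s2⟩ := scale _ _ hr
    have := (hu z).2
    have : M * u z ≤ M := by nlinarith
    have b1 : Real.exp (M * (r - 1) - 2) ≤ Real.exp (-1) := Real.exp_le_exp.2 (by nlinarith)
    have b2 : Real.exp (-M - 4) ≤ Real.exp (-1) := Real.exp_le_exp.2 (by linarith)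
    have b3 := two_exp_le (-1) 0 (by norm_num)
    rw [Real.exp_zero] at b3
    linarith
  · obtain ⟨r, hr, h1, h2⟩ := key z hz
    obtain ⟨s1, s2⟩ := scale _ _ hr
    rw [hu1 hzK, Pi.one_apply] at s2
    have b1 : Real.exp (-3) ≤ Real.exp (M * (r - 1) - 2) := Real.exp_le_exp.2 (by nlinarith)
    have b2 : Real.exp (-M - 4) ≤ Real.exp (-4) := Real.exp_le_exp.2 (by linarith)
    have b3 := two_exp_le (-4) (-3) (by norm_num)
    linarith
  · obtain ⟨r, hr, h1, h2⟩ := key z hz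
    obtain ⟨s1, s2⟩ := scale _ _ hr
    rw [hu0 hzU, Pi.zero_apply] at s1
    have b1 : Real.exp (M * (r - 1) - 2) ≤ Real.exp (-n - 1) := Real.exp_le_exp.2 (by nlinarith)
    have b2 : Real.exp (-M - 4) ≤ Real.exp (-n - 1) := Real.exp_le_exp.2 (by linarith)
    have b3 := two_exp_le (-n - 1) (-n) (by linarith)
    linarith


/-- **Analytic polynomials separating a singular measure from Haar measure on the circle.**
Let `ν` be a finite Borel measure on `ℂ` carried by the unit circle and mutually singular
with respect to the Haar (arc-length) measure `haar` on the circle (realized as the image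
of Lebesgue measure on `(0, 2π]` under `t ↦ e^{it}`). Then there are `c > 0` and analytic
polynomials `φₙ` with `|φₙ| ≤ 1` on the circle, `φₙ(z) → 0` for Haar-a.e. `z`, and
`liminf |φₙ(z)| ≥ c` for `ν`-a.e. `z`. -/
theorem singular_measure_polynomials
    (ν : Measure ℂ) [IsFiniteMeasure ν]
    (hcircle : ν {z : ℂ | ‖z‖ ≠ 1} = 0)
    (haar : Measure ℂ)
    (hhaar : haar = Measure.map (fun t : ℝ => Complex.exp (t * Complex.I))
        (volume.restrict (Set.Ioc 0 (2 * π))))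
    (hsing : ν.MutuallySingular haar) :
    ∃ c : ℝ, 0 < c ∧ ∃ φ : ℕ → Polynomial ℂ,
      (∀ (n : ℕ) (z : ℂ), ‖z‖ = 1 → ‖(φ n).eval z‖ ≤ 1) ∧
      (∀ᵐ z ∂haar, Tendsto (fun n : ℕ => (φ n).eval z) atTop (nhds 0)) ∧
      (∀ᵐ z ∂ν, c ≤ Filter.liminf (fun n : ℕ => ‖(φ n).eval z‖) atTop) := by
  have hmeas : Measurable (fun t : ℝ => Complex.exp (t * Complex.I)) := by fun_prop
  haveI : IsFiniteMeasure haar := by rw [hhaar]; infer_instance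
  have hcirc' : ∀ᵐ z ∂haar, ‖z‖ = 1 := by
    rw [hhaar, ae_map_iff hmeas.aemeasurable (measurableSet_eq_fun (by fun_prop) (by fun_prop))]
    exact Eventually.of_forall fun t => Complex.norm_exp_ofReal_mul_I t
  have hcirc : ∀ᵐ z ∂ν, ‖z‖ = 1 := hcircle
  obtain ⟨E, hE, hνE, hhE⟩ := hsing
  have hpos : ∀ n : ℕ, ((1 / 2 : ENNReal) ^ n) ≠ 0 := fun n => by simp
  have hsum : ∑' n : ℕ, ((1 / 2 : ENNReal) ^ n) ≠ ⊤ := by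
    rw [ENNReal.tsum_geometric]; simp
  have hK : ∀ n : ℕ, ∃ K ⊆ Eᶜ, IsCompact K ∧ ν (Eᶜ \ K) < (1 / 2 : ENNReal) ^ n := fun n =>
    hE.compl.exists_isCompact_diff_lt (measure_ne_top _ _) (hpos n)
  choose K hKE hKc hKν using hK
  have hU : ∀ n : ℕ, ∃ U ⊇ K n, IsOpen U ∧ haar U < (1 / 2 : ENNReal) ^ n := fun n =>
    (K n).exists_isOpen_lt_of_lt _ (by
      rw [measure_mono_null (hKE n) hhE]; exact pos_iff_ne_zero.2 (hpos n))
  choose U hKU hUo hUh using hU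
  choose φ h1 h2 h3 using fun n => aux_poly (K n) (U n) (hKc n) (hUo n) (hKU n) n
  refine ⟨Real.exp (-4), Real.exp_pos _, φ, h1, ?_, ?_⟩
  · have hbc := ae_eventually_notMem (μ := haar) (s := U)
      (ne_top_of_le_ne_top hsum (ENNReal.tsum_le_tsum fun n => (hUh n).le))
    filter_upwards [hcirc', hbc] with z hz hzU
    refine squeeze_zero_norm' (a := fun n : ℕ => Real.exp (-(n : ℝ))) ?_ ?_
    · filter_upwards [hzU] with n hn using h3 n z hz hn
    · exact Real.tendsto_exp_neg_atTop_nhds_zero.comp tendsto_natCast_atTop_atTop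
  · have hbc := ae_eventually_notMem (μ := ν) (s := fun n => Eᶜ \ K n)
      (ne_top_of_le_ne_top hsum (ENNReal.tsum_le_tsum fun n => (hKν n).le))
    have hEae : ∀ᵐ z ∂ν, z ∉ E := measure_eq_zero_iff_ae_notMem.1 hνE
    filter_upwards [hcirc, hbc, hEae] with z hz hzK hzE
    refine le_liminf_of_le ?_ ?_
    · exact (isBoundedUnder_of ⟨1, fun n => h1 n z hz⟩).isCoboundedUnder_ge
    · filter_upwards [hzK] with n hn
      refine h2 n z hz ?_
      by_contra hcon
      exact hn ⟨hzE, hcon⟩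
end
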